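/- Let Q be one of the graphs A_n (n ≥ 1), D_n (n ≥ 4), E_6, E_7 or E_8. Then the Birman–Murakami–Wenzl algebra B(Q) over K = ℚ(l,δ) is quasi-hereditary. -/

import Mathlib

open FreeAlgebra

open Pointwise in
/-- A two-sided ideal `J` of a ring `A` is a heredity ideal if `J·J = J`,
`J·rad(A)·J = 0` (where `rad(A)` is the Jacobson radical), and `J` is
projective as a left `A`-module. -/
def IsHeredityIdeal (A : Type*) [Ring A] (J : TwoSidedIdeal A) : Prop :=
  Submodule.span A ((J : Set A) * (J : Set A)) = TwoSidedIdeal.asIdeal J ∧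
  (∀ x ∈ J, ∀ y ∈ Ideal.jacobson (⊥ : Ideal A), ∀ z ∈ J, x * y * z = 0) ∧
  Module.Projective A (TwoSidedIdeal.asIdeal J)

/-- A ring `A` is quasi-hereditary if there is a finite chain of two-sided ideals
`0 = J_0 ⊆ J_1 ⊆ ⋯ ⊆ J_m = A` such that `J_j/J_{j-1}` is a heredity ideal of
`A/J_{j-1}` for each `1 ≤ j ≤ m`. -/
def IsQuasiHereditary (A : Type*) [Ring A] : Prop :=
  ∃ (m : ℕ) (J : Fin (m + 1) → TwoSidedIdeal A),
    Monotone J ∧ J 0 = ⊥ ∧ J (Fin.last m) = ⊤ ∧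
    ∀ j : Fin m,
      IsHeredityIdeal ((J j.castSucc).ringCon.Quotient)
        (TwoSidedIdeal.map ((J j.castSucc).ringCon.mk') (J j.succ))
/-- The path graph (Coxeter diagram of type `A_n`) on nodes `1, …, n`
(realized as `Fin n`, node `i` corresponding to index `i-1`): node `i` is
adjacent to node `i+1` for `1 ≤ i ≤ n-1`. -/
def typeA (n : ℕ) : SimpleGraph (Fin n) :=
  SimpleGraph.fromRel (fun i j => (i : ℕ) + 1 = (j : ℕ))

/-- The Coxeter diagram of type `D_n` (`n ≥ 4`) on nodes `1, …, n` (realized as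
`Fin n`, node `i` corresponding to index `i-1`): nodes `1` and `2` are both
adjacent to node `3`, and nodes `i`, `i+1` are adjacent for `3 ≤ i ≤ n-1`. -/
def typeD (n : ℕ) : SimpleGraph (Fin n) :=
  SimpleGraph.fromRel (fun i j =>
    ((i : ℕ) = 0 ∧ (j : ℕ) = 2) ∨ ((i : ℕ) = 1 ∧ (j : ℕ) = 2) ∨
      (2 ≤ (i : ℕ) ∧ (i : ℕ) + 1 = (j : ℕ)))

/-- The Coxeter diagram of type `E_n` (`n = 6, 7, 8`) on nodes `1, …, n`
(realized as `Fin n`, node `i` corresponding to index `i-1`): a path on nodes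
`1, 3, 4, …, n` together with node `2` attached to node `4`. -/
def typeE (n : ℕ) : SimpleGraph (Fin n) :=
  SimpleGraph.fromRel (fun i j =>
    ((i : ℕ) = 0 ∧ (j : ℕ) = 2) ∨ ((i : ℕ) = 1 ∧ (j : ℕ) = 3) ∨
      (2 ≤ (i : ℕ) ∧ (i : ℕ) + 1 = (j : ℕ)))
/-- The field `K = ℚ(l,δ)` of rational functions over `ℚ` in two independent
variables `l` and `δ`, realized as an iterated rational function field. -/
abbrev BMWField : Type := RatFunc (RatFunc ℚ)

/-- The variable `l` of `K = ℚ(l,δ)`. -/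
noncomputable def lVar : BMWField := RatFunc.X

/-- The variable `δ` of `K = ℚ(l,δ)`. -/
noncomputable def deltaVar : BMWField := RatFunc.C RatFunc.X

/-- The element `m = (l - l⁻¹)/(1 - δ)` of `K = ℚ(l,δ)`. -/
noncomputable def mVar : BMWField := (lVar - lVar⁻¹) / (1 - deltaVar)

/-- The defining relations of the Birman–Murakami–Wenzl algebra `B(Q)` of the
simply-laced type given by the graph `Q`, imposed on the free algebra over
`K = ℚ(l,δ)` on the generators `g_1, …, g_n` (encoded as `Sum.inl i`) and
`e_1, …, e_n` (encoded as `Sum.inr i`). -/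
inductive BMWRel (n : ℕ) (Q : SimpleGraph (Fin n)) :
    FreeAlgebra BMWField (Fin n ⊕ Fin n) → FreeAlgebra BMWField (Fin n ⊕ Fin n) → Prop
  /-- `g_i g_j = g_j g_i` whenever `i ≁ j` -/
  | gg (i j : Fin n) (hne : i ≠ j) (hadj : ¬ Q.Adj i j) :
      BMWRel n Q (ι BMWField (.inl i) * ι BMWField (.inl j))
        (ι BMWField (.inl j) * ι BMWField (.inl i))
  /-- `g_i g_j g_i = g_j g_i g_j` whenever `i ∼ j` -/
  | braid (i j : Fin n) (hadj : Q.Adj i j) :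
      BMWRel n Q (ι BMWField (.inl i) * ι BMWField (.inl j) * ι BMWField (.inl i))
        (ι BMWField (.inl j) * ι BMWField (.inl i) * ι BMWField (.inl j))
  /-- `m·e_i = l·(g_i² + m·g_i - 1)` -/
  | quad (i : Fin n) :
      BMWRel n Q (mVar • ι BMWField (.inr i))
        (lVar • (ι BMWField (.inl i) * ι BMWField (.inl i)
          + mVar • ι BMWField (.inl i) - 1))
  /-- `g_i e_i = l⁻¹·e_i` -/
  | ge (i : Fin n) :
      BMWRel n Q (ι BMWField (.inl i) * ι BMWField (.inr i)) (lVar⁻¹ • ι BMWField (.inr i))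
  /-- `e_i g_j e_i = l·e_i` whenever `i ∼ j` -/
  | ege (i j : Fin n) (hadj : Q.Adj i j) :
      BMWRel n Q (ι BMWField (.inr i) * ι BMWField (.inl j) * ι BMWField (.inr i))
        (lVar • ι BMWField (.inr i))

/-- The Birman–Murakami–Wenzl algebra `B(Q)` of simply-laced type `Q` over
the rational function field `K = ℚ(l,δ)`. -/
abbrev BMWAlgebra (n : ℕ) (Q : SimpleGraph (Fin n)) : Type :=
  RingQuot (BMWRel n Q)


section Part1
set_option linter.unusedSimpArgs false

/-- Root data for a simply laced graph: an integral positive definite form. -/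
structure PosForm {n : ℕ} (Q : SimpleGraph (Fin n)) where
  B : LinearMap.BilinForm ℤ (Fin n → ℤ)
  symm : ∀ v w, B v w = B w v
  diag : ∀ i, B (Pi.single i 1) (Pi.single i 1) = 2
  adj : ∀ i j, Q.Adj i j → B (Pi.single i 1) (Pi.single j 1) = -1
  nadj : ∀ i j, i ≠ j → ¬ Q.Adj i j → B (Pi.single i 1) (Pi.single j 1) = 0
  pos : ∀ v, v ≠ 0 → 0 < B v v

/-- Braid equivalence of words. -/
inductive BE {n : ℕ} (Q : SimpleGraph (Fin n)) : List (Fin n) → List (Fin n) → Prop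
  | refl (x) : BE Q x x
  | symm {x y} : BE Q x y → BE Q y x
  | trans {x y z} : BE Q x y → BE Q y z → BE Q x z
  | comm (a b i j) : i ≠ j → ¬ Q.Adj i j → BE Q (a ++ i :: j :: b) (a ++ j :: i :: b)
  | braid (a b i j) : Q.Adj i j → BE Q (a ++ i :: j :: i :: b) (a ++ j :: i :: j :: b)

namespace BE
variable {n : ℕ} {Q : SimpleGraph (Fin n)}

lemma app {x y : List (Fin n)} (h : BE Q x y) (c d : List (Fin n)) :
    BE Q (c ++ x ++ d) (c ++ y ++ d) := by
  induction h with
  | refl x => exact BE.refl _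
  | symm _ ih => exact BE.symm ih
  | trans _ _ ih1 ih2 => exact BE.trans ih1 ih2
  | comm a b i j h1 h2 => simpa using BE.comm (c ++ a) (b ++ d) i j h1 h2
  | braid a b i j h1 => simpa using BE.braid (c ++ a) (b ++ d) i j h1

lemma appr {x y : List (Fin n)} (h : BE Q x y) (d : List (Fin n)) :
    BE Q (x ++ d) (y ++ d) := by simpa using h.app [] d

lemma length_eq {x y : List (Fin n)} (h : BE Q x y) : x.length = y.length := by
  induction h with
  | refl x => rfl
  | symm _ ih => exact ih.symm
  | trans _ _ ih1 ih2 => exact ih1.trans ih2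
  | comm a b i j h1 h2 => simp
  | braid a b i j h1 => simp

lemma prod_eq {M : Type*} [Monoid M] (s : Fin n → M)
    (hc : ∀ i j, i ≠ j → ¬ Q.Adj i j → s i * s j = s j * s i)
    (hb : ∀ i j, Q.Adj i j → s i * s j * s i = s j * s i * s j)
    {x y : List (Fin n)} (h : BE Q x y) : (x.map s).prod = (y.map s).prod := by
  induction h with
  | refl x => rfl
  | symm _ ih => exact ih.symm
  | trans _ _ ih1 ih2 => exact ih1.trans ih2
  | comm a b i j h1 h2 =>
    simp only [List.map_append, List.map_cons, List.prod_append, List.prod_cons]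
    rw [← mul_assoc (s i), hc i j h1 h2, mul_assoc (s j)]
  | braid a b i j h1 =>
    simp only [List.map_append, List.map_cons, List.prod_append, List.prod_cons]
    have := hb i j h1
    rw [← mul_assoc (s j), ← mul_assoc (s i), ← mul_assoc (s i), hb i j h1]
    simp only [mul_assoc]
end BE

namespace PosForm
variable {n : ℕ} {Q : SimpleGraph (Fin n)} (P : PosForm Q)

/-- simple root -/
abbrev al (i : Fin n) : Fin n → ℤ := Pi.single i 1

/-- simple reflection -/
def sr (i : Fin n) : Module.End ℤ (Fin n → ℤ) :=
  LinearMap.id - (P.B.flip (al i)).smulRight (al i)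

@[simp] lemma sr_apply (i : Fin n) (v : Fin n → ℤ) : P.sr i v = v - P.B v (al i) • al i := by
  simp [sr]

/-- action of a word -/
def act (x : List (Fin n)) : Module.End ℤ (Fin n → ℤ) := (x.map P.sr).prod

@[simp] lemma act_nil : P.act [] = 1 := by simp [act]
lemma act_append (x y) : P.act (x ++ y) = P.act x * P.act y := by simp [act]
lemma act_cons (i y) : P.act (i :: y) = P.sr i * P.act y := by simp [act]
lemma act_snoc_apply (x i v) : P.act (x ++ [i]) v = P.act x (P.sr i v) := by
  simp [act]

lemma sr_iso (i v w) : P.B (P.sr i v) (P.sr i w) = P.B v w := by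
  simp only [sr_apply, map_sub, map_smul, LinearMap.sub_apply, LinearMap.smul_apply, smul_eq_mul,
    P.diag, P.symm (al i) w]
  ring

lemma sr_sq (i v) : P.sr i (P.sr i v) = v := by
  simp only [sr_apply, map_sub, map_smul, LinearMap.sub_apply, LinearMap.smul_apply, smul_eq_mul,
    P.diag]
  module

lemma sr_sq' (i) : P.sr i * P.sr i = 1 := by
  ext1; ext1; simp [Module.End.mul_apply, P.sr_sq, -sr_apply]

lemma sr_self (i) : P.sr i (al i) = - al i := by
  simp only [sr_apply, P.diag]; module

lemma sr_adj {i j} (h : Q.Adj i j) : P.sr i (al j) = al j + al i := by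
  simp only [sr_apply, P.adj _ _ h.symm]; module

lemma sr_nadj {i j} (hn : i ≠ j) (h : ¬ Q.Adj i j) : P.sr i (al j) = al j := by
  simp only [sr_apply, P.nadj _ _ hn.symm (fun h' => h h'.symm)]; module

lemma act_iso (x v w) : P.B (P.act x v) (P.act x w) = P.B v w := by
  induction x with
  | nil => simp
  | cons i y ih => rw [act_cons, Module.End.mul_apply, Module.End.mul_apply, sr_iso, ih]

lemma sr_comm (i j) (hn : i ≠ j) (h : ¬ Q.Adj i j) : P.sr i * P.sr j = P.sr j * P.sr i := by
  refine LinearMap.ext fun v => ?_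
  have h1 := P.nadj _ _ hn h
  have h2 := P.nadj _ _ hn.symm (fun h' => h h'.symm)
  simp only [Module.End.mul_apply, sr_apply, map_sub, map_smul, LinearMap.sub_apply,
    LinearMap.smul_apply, smul_eq_mul, h1, h2]
  module

lemma sr_braid (i j) (h : Q.Adj i j) :
    P.sr i * P.sr j * P.sr i = P.sr j * P.sr i * P.sr j := by
  refine LinearMap.ext fun v => ?_
  have h1 := P.adj _ _ h
  have h2 := P.adj _ _ h.symm
  simp only [Module.End.mul_apply, sr_apply, map_sub, map_smul, LinearMap.sub_apply,
    LinearMap.smul_apply, smul_eq_mul, h1, h2, P.diag]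
  module

lemma act_BE {x y} (h : BE Q x y) : P.act x = P.act y :=
  h.prod_eq P.sr (P.sr_comm) (P.sr_braid)

lemma eq_sum (v : Fin n → ℤ) : v = ∑ i, v i • (al i : Fin n → ℤ) := by
  ext j
  simp [Finset.sum_apply, Pi.single_apply]

lemma B_expand (v w : Fin n → ℤ) : P.B v w = ∑ i, ∑ j, v i * w j * P.B (al i) (al j) := by
  conv_lhs => rw [eq_sum v, eq_sum w]
  simp only [map_sum, LinearMap.sum_apply, map_smul, LinearMap.smul_apply, smul_eq_mul,
    Finset.mul_sum]
  rw [Finset.sum_comm]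
  refine Finset.sum_congr rfl fun i _ => Finset.sum_congr rfl fun j _ => by ring

lemma even (v : Fin n → ℤ) : Even (P.B v v) := by
  rw [eq_sum v]
  induction (Finset.univ : Finset (Fin n)) using Finset.induction_on with
  | empty => simp
  | insert a s ha ih =>
    rw [Finset.sum_insert ha]
    obtain ⟨k, hk⟩ := ih
    refine ⟨k + v a * v a + v a * P.B (al a) (∑ i ∈ s, v i • (al i : Fin n → ℤ)), ?_⟩
    simp only [map_add, LinearMap.add_apply, hk]
    rw [P.symm (∑ i ∈ s, v i • (al i : Fin n → ℤ))]
    simp only [map_smul, LinearMap.smul_apply, smul_eq_mul, P.diag]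
    ring

lemma two_le (v : Fin n → ℤ) (h : v ≠ 0) : 2 ≤ P.B v v := by
  have := P.pos v h
  obtain ⟨k, hk⟩ := P.even v
  omega

lemma sign {v : Fin n → ℤ} (h : P.B v v = 2) : 0 ≤ v ∨ v ≤ 0 := by
  set a : Fin n → ℤ := v ⊔ 0
  set b : Fin n → ℤ := (-v) ⊔ 0
  have hv : v = a - b := by
    ext i; simp only [a, b, Pi.sub_apply, Pi.sup_apply, Pi.neg_apply, Pi.zero_apply]
    omega
  have hab : P.B a b ≤ 0 := by
    rw [B_expand]
    refine Finset.sum_nonpos fun i _ => Finset.sum_nonpos fun j _ => ?_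
    have ha : 0 ≤ a i := by simp [a]
    have hb : 0 ≤ b j := by simp [b]
    by_cases hij : i = j
    · subst hij
      have : a i * b i = 0 := by
        simp only [a, b, Pi.sup_apply, Pi.neg_apply, Pi.zero_apply, mul_eq_zero]
        omega
      rw [this]; simp
    · have : P.B (al i) (al j) ≤ 0 := by
        by_cases hq : Q.Adj i j
        · rw [P.adj _ _ hq]; norm_num
        · rw [P.nadj _ _ hij hq]
      exact mul_nonpos_of_nonneg_of_nonpos (mul_nonneg ha hb) this
  have key : P.B v v = P.B a a + P.B b b - 2 * P.B a b := by
    rw [hv]; simp only [map_sub, LinearMap.sub_apply, P.symm b a]; ring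
  by_cases ha : a = 0
  · right; intro i
    have := congrFun ha i
    simp only [a, Pi.sup_apply, Pi.zero_apply] at this ⊢
    omega
  by_cases hb : b = 0
  · left; intro i
    have := congrFun hb i
    simp only [b, Pi.sup_apply, Pi.neg_apply, Pi.zero_apply] at this ⊢
    omega
  have := P.two_le a ha
  have := P.two_le b hb
  omega

lemma root_ne {v : Fin n → ℤ} (h : P.B v v = 2) : v ≠ 0 := by rintro rfl; simp at h

lemma act_root (x i) : P.B (P.act x (al i)) (P.act x (al i)) = 2 := by
  rw [act_iso, P.diag]

lemma act_sign (x i) : 0 ≤ P.act x (al i) ∨ P.act x (al i) ≤ 0 := P.sign (P.act_root x i)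

/-- Cauchy–Schwarz for roots -/
lemma pair_le {v w : Fin n → ℤ} (hv : P.B v v = 2) (hw : P.B w w = 2) : P.B v w ≤ 2 := by
  by_contra hc
  have h1 : P.B (v - w) (v - w) = 4 - 2 * P.B v w := by
    simp only [map_sub, LinearMap.sub_apply, P.symm w v, hv, hw]; ring
  have h2 : 0 ≤ P.B (v - w) (v - w) := by
    by_cases h : v - w = 0
    · simp [h]
    · exact (P.pos _ h).le
  omega

lemma le_pair {v w : Fin n → ℤ} (hv : P.B v v = 2) (hw : P.B w w = 2) : -2 ≤ P.B v w := by
  have := P.pair_le (v := -v) (w := w) (by simpa using hv) hw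
  simp at this; omega

lemma pair_eq {v w : Fin n → ℤ} (hv : P.B v v = 2) (hw : P.B w w = 2) (h : P.B v w = 2) :
    v = w := by
  by_contra hc
  have h1 : P.B (v - w) (v - w) = 4 - 2 * P.B v w := by
    simp only [map_sub, LinearMap.sub_apply, P.symm w v, hv, hw]; ring
  have := P.pos _ (sub_ne_zero.2 hc)
  omega

lemma finite_roots : {v : Fin n → ℤ | P.B v v = 2}.Finite := by
  have hinj : Function.Injective (fun (v : Fin n → ℤ) (i : Fin n) => P.B v (al i)) := by
    intro v w h
    by_contra hc
    have h0 : ∀ i, P.B (v - w) (al i) = 0 := fun i => by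
      have := congrFun h i
      simp only [map_sub, LinearMap.sub_apply] at this ⊢
      omega
    have := P.pos _ (sub_ne_zero.2 hc)
    have h1 : P.B (v - w) (v - w) = ∑ i, (v - w) i • P.B (v - w) (al i) := by
      conv_lhs => rw [show P.B (v - w) (v - w) = P.B (v - w) (∑ i, (v - w) i • (al i : Fin n → ℤ))
        from by rw [← eq_sum]]
      rw [map_sum]
      simp only [map_smul]
    simp only [h0, smul_zero, Finset.sum_const_zero] at h1
    omega
  refine Set.Finite.of_finite_image (f := fun (v : Fin n → ℤ) (i : Fin n) => P.B v (al i)) ?_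
    hinj.injOn
  refine (Set.Finite.pi' (t := fun _ : Fin n => Set.Icc (-2 : ℤ) 2)
    (fun _ => Set.finite_Icc _ _)).subset ?_
  rintro _ ⟨v, hv, rfl⟩ i
  exact ⟨P.le_pair hv (P.diag i), P.pair_le hv (P.diag i)⟩

lemma not_both {v : Fin n → ℤ} (h : P.B v v = 2) (h1 : 0 ≤ v) (h2 : v ≤ 0) : False :=
  P.root_ne h (le_antisymm h2 h1)

/-- Tits' word lemma. -/
lemma tits (k : ℕ) : ∀ (x : List (Fin n)) (j : Fin n), x.length = k → P.act x (al j) ≤ 0 →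
    (∃ y, BE Q x (y ++ [j])) ∨ ∃ a i b, BE Q x (a ++ i :: i :: b) := by
  induction k using Nat.strong_induction_on with
  | _ k ih =>
  intro x j hk hneg
  rcases List.eq_nil_or_concat x with rfl | ⟨y, i, rfl⟩
  · exfalso
    have h1 : (0 : Fin n → ℤ) ≤ al j := by intro t; simp [Pi.single_apply]; split_ifs <;> simp
    exact P.not_both (P.diag j) h1 (by simp at hneg)
  rw [List.concat_eq_append] at *
  have hy : y.length < k := by simp at hk; omega
  by_cases hij : i = j
  · subst hij; exact Or.inl ⟨y, BE.refl _⟩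
  rw [act_snoc_apply] at hneg
  by_cases hadj : Q.Adj i j
  · rw [sr_adj _ hadj] at hneg
    rcases P.act_sign y i with hpos | hneg'
    · have hj : P.act y (al j) ≤ 0 := by
        rw [map_add] at hneg
        intro t
        have h1 := hneg t
        have h2 := hpos t
        simp only [Pi.add_apply, Pi.zero_apply] at h1 h2 ⊢
        omega
      rcases ih _ hy y j rfl hj with ⟨u, hu⟩ | ⟨a, c, b, hu⟩
      · have hul : u.length < k := by have := hu.length_eq; simp at this; omega
        have hui : P.act u (al i) ≤ 0 := by
          rw [P.act_BE hu, act_snoc_apply, map_add, map_add, sr_self, sr_adj _ hadj.symm] at hneg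
          have e : (-al j + (al i + al j) : Fin n → ℤ) = al i := by abel
          rwa [← map_add, e] at hneg
        rcases ih _ hul u i rfl hui with ⟨w, hw⟩ | ⟨a, c, b, hw⟩
        · left
          refine ⟨w ++ [j, i], ?_⟩
          refine (hu.appr [i]).trans ?_
          have h1 := hw.appr [j, i]
          simp only [List.append_assoc, List.cons_append, List.nil_append] at h1 ⊢
          exact h1.trans (BE.braid w [] i j hadj)
        · right
          refine ⟨a, c, b ++ [j, i], ?_⟩
          refine (hu.appr [i]).trans ?_
          have h1 := hw.appr [j, i]
          simpa using h1
      · right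
        exact ⟨a, c, b ++ [i], by simpa using hu.appr [i]⟩
    · rcases ih _ hy y i rfl hneg' with ⟨u, hu⟩ | ⟨a, c, b, hu⟩
      · right; exact ⟨u, i, [], by simpa using hu.appr [i]⟩
      · right
        exact ⟨a, c, b ++ [i], by simpa using hu.appr [i]⟩
  · rw [sr_nadj _ hij hadj] at hneg
    rcases ih _ hy y j rfl hneg with ⟨u, hu⟩ | ⟨a, c, b, hu⟩
    · left
      refine ⟨u ++ [i], (hu.appr [i]).trans ?_⟩
      simpa using BE.comm u [] j i (Ne.symm hij) (fun h => hadj h.symm)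
    · right
      exact ⟨a, c, b ++ [i], by simpa using hu.appr [i]⟩

lemma act_rev (x v) : P.act x.reverse (P.act x v) = v := by
  induction x generalizing v with
  | nil => simp
  | cons i y ih =>
    rw [List.reverse_cons, act_snoc_apply, act_cons, Module.End.mul_apply, sr_sq, ih]

/-- long words contain a square, up to braid moves -/
lemma long (P : PosForm Q) : ∃ N : ℕ, ∀ x : List (Fin n), N < x.length →
    ∃ a i b, BE Q x (a ++ i :: i :: b) := by
  classical
  have := P.finite_roots.fintype
  refine ⟨Fintype.card {v : Fin n → ℤ | P.B v v = 2}, fun x hx => ?_⟩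
  obtain ⟨s', t', hne', heq'⟩ := Fintype.exists_ne_map_eq_of_card_lt
    (fun t : Fin x.length => (⟨P.act (x.take t) (al x[t]), P.act_root _ _⟩ :
      {v : Fin n → ℤ | P.B v v = 2})) (by rw [Fintype.card_fin]; exact hx)
  obtain ⟨s, t, hlt, heq⟩ : ∃ s t : Fin x.length, s < t ∧
      P.act (x.take s) (al x[s]) = P.act (x.take t) (al x[t]) := by
    rcases lt_or_gt_of_ne hne' with h | h
    · exact ⟨s', t', h, by simpa using heq'⟩
    · exact ⟨t', s', h, by simpa using heq'.symm⟩
  set z := (x.take t).drop (s + 1) with hz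
  have h1 : x.take t = x.take s ++ x[s] :: z := by
    have hs : (s : ℕ) < (x.take t).length := by
      simp only [List.length_take]; omega
    have := List.take_append_drop s (x.take t)
    rw [List.drop_eq_getElem_cons hs, List.take_take] at this
    rw [← this]
    simp [hz, min_eq_left (le_of_lt (show (s : ℕ) < t from hlt))]
  have h2 : x = x.take t ++ x[t] :: x.drop (t + 1) := by
    have := List.take_append_drop t x
    rw [List.drop_eq_getElem_cons t.2] at this
    exact this.symm
  have h3 : P.act z (al x[t]) = - al x[s] := by
    rw [h1, act_append, Module.End.mul_apply, act_cons, Module.End.mul_apply] at heq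
    have h4 := congrArg (P.act (x.take s).reverse) heq
    rw [act_rev, act_rev] at h4
    have h5 := congrArg (P.sr x[s]) h4
    rw [sr_self, sr_sq] at h5
    exact h5.symm
  have hneg : P.act z (al x[t]) ≤ 0 := by
    rw [h3]; intro k; simp [Pi.single_apply]; split_ifs <;> simp
  have hx2 : x = (x.take s ++ [x[s]]) ++ z ++ (x[t] :: x.drop (t + 1)) := by
    conv_lhs => rw [h2, h1]
    simp only [List.append_assoc, List.cons_append, List.nil_append]
  rcases P.tits _ z x[t] rfl hneg with ⟨y, hy⟩ | ⟨a, i, b, hy⟩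
  · refine ⟨x.take s ++ [x[s]] ++ y, x[t], x.drop (t + 1), ?_⟩
    have := hy.app (x.take s ++ [x[s]]) (x[t] :: x.drop (t + 1))
    rw [← hx2] at this
    simpa using this
  · refine ⟨x.take s ++ [x[s]] ++ a, i, b ++ (x[t] :: x.drop (t + 1)), ?_⟩
    have := hy.app (x.take s ++ [x[s]]) (x[t] :: x.drop (t + 1))
    rw [← hx2] at this
    simpa using this

end PosForm
end Part1

section Part2
open PosForm
/-- The relations satisfied in the residue algebra. -/
structure BarRel {n : ℕ} (Q : SimpleGraph (Fin n)) {R : Type*} [Ring R] (s ε : Fin n → R) :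
    Prop where
  ss : ∀ i, s i * s i = 1
  sε : ∀ i, s i * ε i = ε i
  εs : ∀ i, ε i * s i = ε i
  εε : ∀ i, ε i * ε i = ε i
  css : ∀ i j, i ≠ j → ¬ Q.Adj i j → s i * s j = s j * s i
  csε : ∀ i j, i ≠ j → ¬ Q.Adj i j → s i * ε j = ε j * s i
  cεε : ∀ i j, i ≠ j → ¬ Q.Adj i j → ε i * ε j = ε j * ε i
  braid : ∀ i j, Q.Adj i j → s i * s j * s i = s j * s i * s j
  ssε : ∀ i j, Q.Adj i j → s i * s j * ε i = ε j * s i * s j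
  zero : ∀ i j, Q.Adj i j → ε i * ε j = 0

namespace BarRel
variable {n : ℕ} {Q : SimpleGraph (Fin n)} {R : Type*} [Ring R] {s ε : Fin n → R}

/-- product of a word -/
def Sp (s : Fin n → R) (x : List (Fin n)) : R := (x.map s).prod

lemma Sp_append (x y) : Sp s (x ++ y) = Sp s x * Sp s y := by simp [Sp]
@[simp] lemma Sp_nil : Sp s [] = 1 := by simp [Sp]
lemma Sp_cons (i y) : Sp s (i :: y) = s i * Sp s y := by simp [Sp]
lemma Sp_snoc (i y) : Sp s (y ++ [i]) = Sp s y * s i := by simp [Sp]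

lemma Sp_BE (H : BarRel Q s ε) {x y} (h : BE Q x y) : Sp s x = Sp s y :=
  h.prod_eq s H.css H.braid

lemma Sp_del (H : BarRel Q s ε) (a i b) : Sp s (a ++ i :: i :: b) = Sp s (a ++ b) := by
  rw [Sp_append, Sp_append, Sp_cons, Sp_cons, ← mul_assoc (s i), H.ss, one_mul]

lemma act_del (P : PosForm Q) (a i b) : P.act (a ++ i :: i :: b) = P.act (a ++ b) := by
  rw [act_append, act_append, act_cons, act_cons, ← mul_assoc (P.sr i), P.sr_sq', one_mul]

lemma Sp_rev (H : BarRel Q s ε) (x) : Sp s x * Sp s x.reverse = 1 := by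
  induction x with
  | nil => simp
  | cons i y ih =>
    rw [List.reverse_cons, Sp_snoc, Sp_cons]
    calc _ = s i * (Sp s y * Sp s y.reverse) * s i := by simp only [mul_assoc]
      _ = 1 := by rw [ih, mul_one, H.ss]

lemma Sp_rev' (H : BarRel Q s ε) (x) : Sp s x.reverse * Sp s x = 1 := by
  simpa using H.Sp_rev x.reverse

lemma al_nonneg (i : Fin n) : (0 : Fin n → ℤ) ≤ al i := by
  intro t; simp [Pi.single_apply]; split_ifs <;> simp

/-- height -/
def ht (v : Fin n → ℤ) : ℤ := ∑ i, v i
lemma ht_add (v w : Fin n → ℤ) : ht (v + w) = ht v + ht w := by simp [ht, Finset.sum_add_distrib]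
lemma ht_sub (v w : Fin n → ℤ) : ht (v - w) = ht v - ht w := by simp [ht, Finset.sum_sub_distrib]
lemma ht_al (i : Fin n) : ht (al i) = 1 := by simp [ht, Pi.single_apply]
lemma ht_nonneg {v : Fin n → ℤ} (h : 0 ≤ v) : 0 ≤ ht v := Finset.sum_nonneg fun i _ => h i
lemma ht_pos {v : Fin n → ℤ} (h : 0 ≤ v) (h0 : v ≠ 0) : 0 < ht v := by
  rcases (ht_nonneg h).lt_or_eq with h1 | h1
  · exact h1
  · exfalso; apply h0
    have := (Finset.sum_eq_zero_iff_of_nonneg (fun i _ => h i)).1 h1.symm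
    ext i; exact this i (Finset.mem_univ i)

lemma U (H : BarRel Q s ε) (P : PosForm Q) (k : ℕ) : ∀ (x : List (Fin n)) (i j : Fin n),
    x.length = k → P.act x (al i) = al j → Sp s x * ε i = ε j * Sp s x := by
  induction k using Nat.strong_induction_on with
  | _ k ih =>
  intro x i j hk hx
  have hdel : (∃ a c b, BE Q x (a ++ c :: c :: b)) → Sp s x * ε i = ε j * Sp s x := by
    rintro ⟨a, c, b, hb⟩
    rw [H.Sp_BE hb, H.Sp_del]
    refine ih _ ?_ (a ++ b) i j rfl ?_
    · have := hb.length_eq; simp at this ⊢; omega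
    · rw [← hx, P.act_BE hb, act_del]
  rcases List.eq_nil_or_concat x with rfl | ⟨y, t, rfl⟩
  · have : i = j := by
      have h1 := congrFun hx i
      simp [Pi.single_apply] at h1
      exact h1
    subst this; simp
  rw [List.concat_eq_append] at *
  have hy : y.length < k := by simp at hk; omega
  rcases P.act_sign y t with hpos | hneg
  swap
  · apply hdel
    rcases P.tits _ y t rfl hneg with ⟨u, hu⟩ | ⟨a, c, b, hu⟩
    · exact ⟨u, t, [], by simpa using hu.appr [t]⟩
    · exact ⟨a, c, b ++ [t], by simpa using hu.appr [t]⟩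
  rw [act_snoc_apply] at hx
  have hti : t ≠ i := by
    rintro rfl
    rw [sr_self, map_neg] at hx
    refine P.not_both (P.diag j) (al_nonneg j) ?_
    have h3 := congrArg Neg.neg hx
    rw [neg_neg] at h3
    rw [h3] at hpos
    simpa [al] using hpos
  by_cases hadj : Q.Adj t i
  · rw [sr_adj _ hadj, map_add] at hx
    have hneg : P.act y (al i) ≤ 0 := by
      rcases P.act_sign y i with h | h
      · exfalso
        have h1 := ht_pos h (P.root_ne (P.act_root y i))
        have h2 := ht_pos hpos (P.root_ne (P.act_root y t))
        have h3 := congrArg ht hx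
        rw [ht_add, ht_al] at h3
        omega
      · exact h
    rcases P.tits _ y i rfl hneg with ⟨u, hu⟩ | ⟨a, c, b, hu⟩
    · have hul : u.length < k := by have := hu.length_eq; simp at this; omega
      have h1 : P.act u (al t) = al j := by
        rw [← map_add, P.act_BE hu, act_snoc_apply, map_add, sr_self, sr_adj _ hadj.symm] at hx
        rw [← hx]; congr 1; abel
      have h2 := ih _ hul u t j rfl h1
      rw [Sp_snoc, H.Sp_BE hu, Sp_snoc]
      calc _ = Sp s u * (s i * s t * ε i) := by simp only [mul_assoc]
        _ = (Sp s u * ε t) * s i * s t := by rw [H.ssε i t hadj.symm]; simp only [mul_assoc]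
        _ = _ := by rw [h2]; simp only [mul_assoc]
    · exact hdel ⟨a, c, b ++ [t], by simpa using hu.appr [t]⟩
  · rw [sr_nadj _ hti hadj] at hx
    have h2 := ih _ hy y i j rfl hx
    rw [Sp_snoc, mul_assoc, H.csε t i hti hadj, ← mul_assoc, h2, mul_assoc]

/-- `a` is the idempotent attached to the root `β`. -/
def IsE (s ε : Fin n → R) (P : PosForm Q) (β : Fin n → ℤ) (a : R) : Prop :=
  ∃ x j, P.act x (al j) = β ∧ a = Sp s x * ε j * Sp s x.reverse

section
variable {P : PosForm Q} {β : Fin n → ℤ} {a : R}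

lemma IsE.root (h : IsE s ε P β a) : P.B β β = 2 := by
  obtain ⟨x, j, rfl, -⟩ := h; exact P.act_root x j

lemma IsE.cons (h : IsE s ε P β a) (k) : IsE s ε P (P.sr k β) (s k * a * s k) := by
  obtain ⟨x, j, rfl, rfl⟩ := h
  refine ⟨k :: x, j, by rw [act_cons]; rfl, ?_⟩
  rw [List.reverse_cons, Sp_snoc, Sp_cons]; simp only [mul_assoc]

lemma IsE.conj (h : IsE s ε P β a) (y) :
    IsE s ε P (P.act y β) (Sp s y * a * Sp s y.reverse) := by
  obtain ⟨x, j, rfl, rfl⟩ := h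
  refine ⟨y ++ x, j, by rw [act_append]; rfl, ?_⟩
  rw [List.reverse_append, Sp_append, Sp_append]; simp only [mul_assoc]

lemma IsE.neg (H : BarRel Q s ε) (h : IsE s ε P β a) : IsE s ε P (-β) a := by
  obtain ⟨x, j, rfl, rfl⟩ := h
  refine ⟨x ++ [j], j, by rw [act_snoc_apply, sr_self, map_neg], ?_⟩
  rw [List.reverse_append, Sp_append, Sp_append]
  simp only [List.reverse_cons, List.reverse_nil, List.nil_append, Sp_cons, Sp_nil, mul_one]
  calc _ = Sp s x * (s j * ε j * s j) * Sp s x.reverse := by rw [H.sε, H.εs]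
    _ = _ := by simp only [mul_assoc]

lemma IsE.simple (H : BarRel Q s ε) {i} (h : IsE s ε P (al i) a) : a = ε i := by
  obtain ⟨x, j, hx, rfl⟩ := h
  rw [H.U P _ x j i rfl hx, mul_assoc, H.Sp_rev, mul_one]

lemma sr_nonneg (hr : P.B β β = 2) (h0 : 0 ≤ β) {i} (hi : β ≠ al i) : 0 ≤ P.sr i β := by
  rcases P.sign (v := P.sr i β) (by rw [sr_iso, hr]) with h | h
  · exact h
  exfalso
  apply hi
  have h1 : β = β i • (al i : Fin n → ℤ) := by
    ext t
    have h2 := h t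
    have h3 := h0 t
    by_cases ht : t = i
    · subst ht; simp
    · simp [Pi.single_apply, ht] at h2 h3 ⊢; omega
  have h2 : β i * β i = 1 := by
    rw [h1] at hr
    simp only [map_smul, LinearMap.smul_apply, smul_eq_mul, P.diag] at hr
    linarith
  have h3 : β i = 1 := by
    have := h0 i
    simp only [Pi.zero_apply] at this
    nlinarith
  rw [h1, h3, one_smul]

lemma exists_desc (hr : P.B β β = 2) (h0 : 0 ≤ β) (hs : ∀ k, β ≠ al k) :
    ∃ k, P.B β (al k) = 1 := by
  by_contra hc
  push Not at hc
  have h1 : P.B β β = ∑ i, β i • P.B β (al i) := by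
    conv_lhs => rw [show P.B β β = P.B β (∑ i, β i • (al i : Fin n → ℤ)) from by rw [← eq_sum]]
    rw [map_sum]
    simp only [map_smul]
  have h2 : P.B β β ≤ 0 := by
    rw [h1]
    refine Finset.sum_nonpos fun i _ => ?_
    refine mul_nonpos_of_nonneg_of_nonpos (h0 i) ?_
    have h3 := P.pair_le hr (P.diag i)
    have h4 : P.B β (al i) ≠ 2 := fun h => hs i (P.pair_eq hr (P.diag i) h)
    have h5 := hc i
    simp only [al] at h3 h4 h5 ⊢
    generalize P.B β (Pi.single i 1) = z at *
    omega
  omega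

lemma desc (H : BarRel Q s ε) (h : ℕ) : ∀ (β : Fin n → ℤ) (a : R), 0 ≤ β → ht β = h →
    IsE s ε P β a → ∀ i, (P.B β (al i) = 0 → ε i * a = a * ε i) ∧
      (P.B β (al i) = 1 ∨ P.B β (al i) = -1 → ε i * a = 0 ∧ a * ε i = 0) := by
  induction h using Nat.strong_induction_on with
  | _ h ih =>
  intro β a h0 hh ha i
  have hr := ha.root
  by_cases hsimp : ∃ k, β = al k
  · obtain ⟨k, rfl⟩ := hsimp
    obtain rfl := ha.simple H
    by_cases hki : k = i
    · subst hki; rw [P.diag]; constructor <;> intro h <;> omega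
    by_cases hadj : Q.Adj k i
    · rw [P.adj _ _ hadj]
      exact ⟨fun h => by omega, fun _ => ⟨H.zero _ _ hadj.symm, H.zero _ _ hadj⟩⟩
    · rw [P.nadj _ _ hki hadj]
      exact ⟨fun _ => (H.cεε _ _ hki hadj).symm, fun h => by omega⟩
  push Not at hsimp
  obtain ⟨k, hk⟩ := exists_desc hr h0 hsimp
  have IH : ∀ (β' : Fin n → ℤ) (a' : R), 0 ≤ β' → ht β' < ht β →
    IsE s ε P β' a' → ∀ i, (P.B β' (al i) = 0 → ε i * a' = a' * ε i) ∧
      (P.B β' (al i) = 1 ∨ P.B β' (al i) = -1 → ε i * a' = 0 ∧ a' * ε i = 0) := by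
    intro β' a' h0' hlt ha'
    have := ht_nonneg h0'
    exact ih (ht β').toNat (by omega) β' a' h0' (by omega) ha'
  have hkβ : P.sr k β = β - al k := by rw [sr_apply, hk, one_smul]
  have h0' : 0 ≤ β - al k := by rw [← hkβ]; exact sr_nonneg hr h0 (hsimp k)
  have ha' : IsE s ε P (β - al k) (s k * a * s k) := by rw [← hkβ]; exact ha.cons k
  have hht : ht (β - al k) < ht β := by rw [ht_sub, ht_al]; omega
  have hpair : ∀ t, P.B (β - al k) (al t) = P.B β (al t) - P.B (al k) (al t) := by
    intro t; simp only [map_sub, LinearMap.sub_apply]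
  -- conjugation formulas
  have hs2 : ∀ t, ∀ z : R, s t * (s t * z) = z := fun t z => by rw [← mul_assoc, H.ss, one_mul]
  have hnadj : i ≠ k → ¬ Q.Adj k i → (P.B β (al i) = 0 → ε i * a = a * ε i) ∧
      (P.B β (al i) = 1 ∨ P.B β (al i) = -1 → ε i * a = 0 ∧ a * ε i = 0) := by
    intro hik hadj
    have hI := IH _ _ h0' hht ha' i
    rw [hpair, P.nadj k i hik.symm hadj, sub_zero] at hI
    have hc := H.csε k i hik.symm hadj
    have e1 : ε i * a = s k * (ε i * (s k * a * s k)) * s k := by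
      calc ε i * a = (s k * s k) * ε i * a * (s k * s k) := by rw [H.ss]; simp
        _ = s k * (s k * ε i) * a * (s k * s k) := by simp only [mul_assoc]
        _ = _ := by rw [hc]; simp only [mul_assoc]
    have e2 : a * ε i = s k * ((s k * a * s k) * ε i) * s k := by
      calc a * ε i = (s k * s k) * a * ε i * (s k * s k) := by rw [H.ss]; simp
        _ = (s k * s k) * a * (ε i * s k) * s k := by simp only [mul_assoc]
        _ = _ := by rw [← hc]; simp only [mul_assoc]
    refine ⟨fun hz => ?_, fun hz => ?_⟩
    · rw [e1, e2, hI.1 hz]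
    · rw [e1, e2, (hI.2 hz).1, (hI.2 hz).2]; simp
  have f1 : ∀ {i}, Q.Adj k i →
      ε i * a = s k * s i * (ε k * (s i * (s k * a * s k) * s i)) * s i * s k := by
    intro i hadj
    have hc := H.ssε k i hadj
    calc ε i * a = ε i * s k * s i * (s i * s k) * a * (s k * (s i * s i) * s k) := by
          simp only [H.ss, mul_one, hs2, mul_assoc]
      _ = _ := by rw [← hc]; simp only [mul_assoc]
  have f2 : ∀ {i}, Q.Adj k i →
      a * ε i = s k * s i * ((s i * (s k * a * s k) * s i) * ε k) * s i * s k := by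
    intro i hadj
    have hc := H.ssε i k hadj.symm
    have hc' : s i * s k * ε i = ε k * s i * s k := hc
    calc a * ε i = s k * (s i * s i) * s k * a * (s k * s i * (s i * s k)) * ε i := by
          simp only [H.ss, mul_one, one_mul, hs2, mul_assoc]
      _ = s k * s i * (s i * (s k * a * s k) * s i) * (s i * s k * ε i) := by
          simp only [mul_assoc]
      _ = _ := by rw [hc']; simp only [mul_assoc]
  refine ⟨fun hz => ?_, fun hz => ?_⟩
  · have hik : i ≠ k := by rintro rfl; simp only [al] at *; omega
    by_cases hadj : Q.Adj k i
    · have hp := hpair i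
      rw [hz, P.adj _ _ hadj] at hp
      have hp' : P.B (β - al k) (al i) = 1 := by rw [hp]; norm_num
      have hne : β - al k ≠ al i := by
        intro h
        rw [h, P.diag] at hp'; omega
      have e : P.sr i (β - al k) = β - al k - al i := by rw [sr_apply, hp', one_smul]
      have h2 := sr_nonneg ha'.root h0' hne
      have h3 := ha'.cons i
      rw [e] at h2 h3
      have h4 := (IH _ _ h2 (by rw [ht_sub, ht_al]; omega) h3 k).1 (by
        rw [map_sub, LinearMap.sub_apply, hpair, hk, P.diag, P.adj _ _ hadj.symm]; norm_num)
      rw [f1 hadj, f2 hadj, h4]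
    · exact (hnadj hik hadj).1 hz
  · rcases hz with hz | hz
    · have e : P.sr i β = β - al i := by rw [sr_apply, hz, one_smul]
      have h2 := sr_nonneg hr h0 (hsimp i)
      have h3 := ha.cons i
      rw [e] at h2 h3
      have h4 := (IH _ _ h2 (by rw [ht_sub, ht_al]; omega) h3 i).2 (by
        right; rw [map_sub, LinearMap.sub_apply, hz, P.diag]; norm_num)
      constructor
      · calc ε i * a = ε i * s i * a * (s i * s i) := by rw [H.ss, H.εs, mul_one]
          _ = (ε i * (s i * a * s i)) * s i := by simp only [mul_assoc]
          _ = 0 := by rw [h4.1, zero_mul]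
      · calc a * ε i = (s i * s i) * a * (s i * ε i) := by rw [H.ss, H.sε, one_mul]
          _ = s i * ((s i * a * s i) * ε i) := by simp only [mul_assoc]
          _ = 0 := by rw [h4.2, mul_zero]
    · have hik : i ≠ k := by rintro rfl; simp only [al] at *; omega
      by_cases hadj : Q.Adj k i
      · have hp := hpair i
        rw [hz, P.adj _ _ hadj] at hp
        have e : P.sr i (β - al k) = β - al k := by rw [sr_apply, hp]; simp
        have h3 := ha'.cons i
        rw [e] at h3
        have h4 := (IH _ _ h0' hht h3 k).2 (by right; rw [hpair, hk, P.diag]; norm_num)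
        rw [f1 hadj, f2 hadj, h4.1, h4.2]; simp
      · exact (hnadj hik hadj).2 (Or.inr hz)

lemma comm_simple (H : BarRel Q s ε) (ha : IsE s ε P β a) (i) : ε i * a = a * ε i := by
  have main : ∀ β, IsE s ε P β a → 0 ≤ β → ε i * a = a * ε i := by
    intro β ha h0
    have hr := ha.root
    have h1 := P.pair_le hr (P.diag i)
    have h2 := P.le_pair hr (P.diag i)
    have hd := desc H (ht β).toNat β a h0 (by have := ht_nonneg h0; omega) ha i
    obtain h | h | h | h | h : P.B β (al i) = 2 ∨ P.B β (al i) = 1 ∨ P.B β (al i) = 0 ∨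
      P.B β (al i) = -1 ∨ P.B β (al i) = -2 := by simp only [al]; omega
    · obtain rfl := P.pair_eq hr (P.diag i) h
      rw [ha.simple H]
    · rw [(hd.2 (Or.inl h)).1, (hd.2 (Or.inl h)).2]
    · exact hd.1 h
    · rw [(hd.2 (Or.inr h)).1, (hd.2 (Or.inr h)).2]
    · have ha' := ha.neg H
      have h3 := P.pair_eq ha'.root (P.diag i) (by simpa using congrArg Neg.neg h)
      rw [h3] at ha'
      rw [ha'.simple H]
  rcases P.sign ha.root with h | h
  · exact main _ ha h
  · exact main _ (ha.neg H) (by simpa using h)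

lemma comm_all (H : BarRel Q s ε) (ha : IsE s ε P β a) {γ b} (hb : IsE s ε P γ b) :
    a * b = b * a := by
  obtain ⟨y, j, rfl, rfl⟩ := hb
  have h := comm_simple H (ha.conj y.reverse) j
  rw [List.reverse_reverse] at h
  have h1 := H.Sp_rev y
  set p := Sp s y
  set q := Sp s y.reverse
  calc a * (p * ε j * q) = (p * q) * a * (p * ε j * q) := by rw [h1, one_mul]
    _ = p * (q * a * p * ε j) * q := by simp only [mul_assoc]
    _ = p * (ε j * (q * a * p)) * q := by rw [h]
    _ = (p * ε j * q) * a * (p * q) := by simp only [mul_assoc]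
    _ = _ := by rw [h1, mul_one]

lemma IsE.idem (H : BarRel Q s ε) (ha : IsE s ε P β a) : a * a = a := by
  obtain ⟨y, j, rfl, rfl⟩ := ha
  have h1 := H.Sp_rev' y
  set p := Sp s y
  set q := Sp s y.reverse
  calc _ = p * ε j * (q * p) * ε j * q := by simp only [mul_assoc]
    _ = p * (ε j * ε j) * q := by rw [h1]; simp only [mul_assoc, one_mul]
    _ = _ := by rw [H.εε]
end
end BarRel
end Part2

section Part3
open PosForm
namespace BarRel
variable {n : ℕ} {Q : SimpleGraph (Fin n)} {R : Type*} [Ring R] {s ε : Fin n → R}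

lemma Sp_short (H : BarRel Q s ε) (P : PosForm Q) : ∃ N : ℕ, ∀ k, ∀ x : List (Fin n),
    x.length = k → ∃ y : List (Fin n), y.length ≤ N ∧ Sp s x = Sp s y := by
  obtain ⟨N, hN⟩ := P.long
  refine ⟨N, fun k => ?_⟩
  induction k using Nat.strong_induction_on with
  | _ k ih =>
  intro x hk
  by_cases hx : x.length ≤ N
  · exact ⟨x, hx, rfl⟩
  obtain ⟨a, i, b, h⟩ := hN x (by omega)
  have hl := h.length_eq
  simp at hl
  obtain ⟨y, hy, e⟩ := ih (a ++ b).length (by simp; omega) (a ++ b) rfl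
  exact ⟨y, hy, by rw [H.Sp_BE h, H.Sp_del, e]⟩

lemma Sp_finite (H : BarRel Q s ε) (P : PosForm Q) : (Set.range (Sp s)).Finite := by
  obtain ⟨N, hN⟩ := H.Sp_short P
  refine ((List.finite_length_le (Fin n) N).image (Sp s)).subset ?_
  rintro _ ⟨x, rfl⟩
  obtain ⟨y, hy, e⟩ := hN _ x rfl
  exact ⟨y, hy, e.symm⟩

lemma E_finite (H : BarRel Q s ε) (P : PosForm Q) : {a | ∃ β, IsE s ε P β a}.Finite := by
  refine (((H.Sp_finite P).prod ((Set.finite_univ (α := Fin n)).prod (H.Sp_finite P))).image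
    (fun t => t.1 * ε t.2.1 * t.2.2)).subset ?_
  rintro _ ⟨β, x, j, -, rfl⟩
  exact ⟨(Sp s x, j, Sp s x.reverse), ⟨⟨x, rfl⟩, trivial, ⟨_, rfl⟩⟩, rfl⟩

/-- the group of word products -/
def SG (H : BarRel Q s ε) : Subgroup Rˣ where
  carrier := {u | ∃ x, (u : R) = Sp s x}
  one_mem' := ⟨[], by simp⟩
  mul_mem' := by
    rintro u v ⟨x, hx⟩ ⟨y, hy⟩
    exact ⟨x ++ y, by rw [Units.val_mul, hx, hy, Sp_append]⟩
  inv_mem' := by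
    rintro u ⟨x, hx⟩
    refine ⟨x.reverse, ?_⟩
    rw [← mul_one (↑u⁻¹ : R), ← H.Sp_rev x, ← hx, Units.inv_mul_cancel_left]

/-- generators of the diagonal group -/
def ZS (s ε : Fin n → R) (P : PosForm Q) : Set Rˣ :=
  {u | ∃ β a, IsE s ε P β a ∧ (u : R) = 1 - 2 * a}

lemma ZS_finite (H : BarRel Q s ε) (P : PosForm Q) : (ZS s ε P).Finite := by
  refine Set.Finite.of_finite_image (f := (fun u : Rˣ => (u : R)))
    (((H.E_finite P).image (fun a => 1 - 2 * a)).subset ?_) (Units.val_injective.injOn)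
  rintro _ ⟨u, ⟨β, a, h, e⟩, rfl⟩
  exact ⟨a, ⟨β, h⟩, e.symm⟩

lemma ZS_comm (H : BarRel Q s ε) (P : PosForm Q) : ∀ u ∈ ZS s ε P, ∀ v ∈ ZS s ε P,
    u * v = v * u := by
  rintro u ⟨β, a, ha, hu⟩ v ⟨γ, b, hb, hv⟩
  ext
  rw [Units.val_mul, Units.val_mul, hu, hv]
  have := comm_all H ha hb
  simp only [mul_sub, sub_mul, two_mul, add_mul, mul_add, this, one_mul, mul_one]
  abel

lemma ZS_sq (H : BarRel Q s ε) (P : PosForm Q) : ∀ u ∈ ZS s ε P, u * u = 1 := by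
  rintro u ⟨β, a, ha, hu⟩
  ext
  rw [Units.val_mul, hu]
  have := ha.idem H
  simp only [mul_sub, sub_mul, two_mul, add_mul, mul_add, this, one_mul, mul_one, Units.val_one]
  abel

lemma NZ_finite (H : BarRel Q s ε) (P : PosForm Q) :
    Finite (Subgroup.closure (ZS s ε P)) := by
  letI : CommGroup (Subgroup.closure (ZS s ε P)) :=
    Subgroup.closureCommGroupOfComm (H.ZS_comm P)
  have : Group.FG (Subgroup.closure (ZS s ε P)) := by
    have := (H.ZS_finite P).to_subtype
    exact Group.closure_finite_fg _
  refine CommGroup.finite_of_fg_isMulTorsion _ ?_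
  rintro ⟨u, hu⟩
  rw [isOfFinOrder_iff_pow_eq_one]
  refine ⟨2, by norm_num, ?_⟩
  have key : ∀ u (hu : u ∈ Subgroup.closure (ZS s ε P)),
      (⟨u, hu⟩ : Subgroup.closure (ZS s ε P)) ^ 2 = 1 := by
    intro u hu
    induction hu using Subgroup.closure_induction with
    | mem x hx => rw [sq]; exact Subtype.ext (H.ZS_sq P x hx)
    | one => exact one_pow 2
    | mul x y hx hy h1 h2 =>
      have := mul_pow (⟨x, hx⟩ : Subgroup.closure (ZS s ε P)) ⟨y, hy⟩ 2
      rw [h1, h2, one_mul] at this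
      exact this
    | inv x hx h =>
      have := inv_pow (⟨x, hx⟩ : Subgroup.closure (ZS s ε P)) 2
      rw [h, inv_one] at this
      exact this
  exact key u hu

lemma SG_finite (H : BarRel Q s ε) (P : PosForm Q) : (H.SG : Set Rˣ).Finite := by
  refine Set.Finite.of_finite_image (f := (fun u : Rˣ => (u : R)))
    ((H.Sp_finite P).subset ?_) (Units.val_injective.injOn)
  rintro _ ⟨u, ⟨x, e⟩, rfl⟩
  exact ⟨x, e.symm⟩

lemma SG_conj (H : BarRel Q s ε) (P : PosForm Q) {u} (hu : u ∈ H.SG) {v}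
    (hv : v ∈ Subgroup.closure (ZS s ε P)) : u * v * u⁻¹ ∈ Subgroup.closure (ZS s ε P) := by
  induction hv using Subgroup.closure_induction with
  | mem v hv =>
    apply Subgroup.subset_closure
    obtain ⟨x, hx⟩ := hu
    obtain ⟨β, a, ha, e⟩ := hv
    refine ⟨_, _, ha.conj x, ?_⟩
    have hi : (↑u⁻¹ : R) = Sp s x.reverse := by
      rw [← mul_one (↑u⁻¹ : R), ← H.Sp_rev x, ← hx, Units.inv_mul_cancel_left]
    rw [Units.val_mul, Units.val_mul, e, hi, hx, mul_sub, sub_mul, mul_one, H.Sp_rev]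
    simp only [two_mul, mul_add, add_mul]
  | one => simp
  | mul x y _ _ h1 h2 => simpa [mul_assoc] using mul_mem h1 h2
  | inv x _ h => simpa [mul_assoc] using inv_mem h

lemma SN_finite (H : BarRel Q s ε) (P : PosForm Q) :
    Finite (H.SG ⊔ Subgroup.closure (ZS s ε P) : Subgroup Rˣ) := by
  have h : ((H.SG ⊔ Subgroup.closure (ZS s ε P) : Subgroup Rˣ) : Set Rˣ).Finite := by
    rw [Subgroup.coe_mul_of_left_le_normalizer_right]
    · have := H.NZ_finite P
      exact (H.SG_finite P).mul (Set.toFinite _)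
    · intro u hu
      rw [Subgroup.mem_normalizer_iff]
      intro v
      refine ⟨H.SG_conj P hu, fun h => ?_⟩
      simpa [mul_assoc] using H.SG_conj P (inv_mem hu) h
  exact h.to_subtype

theorem semisimple {κ : Type*} [Field κ] [CharZero κ] [Algebra κ R] (H : BarRel Q s ε)
    (P : PosForm Q) (hgen : Algebra.adjoin κ (Set.range s ∪ Set.range ε) = ⊤) :
    IsSemisimpleRing R := by
  have hfin := H.SN_finite P
  set Γ : Subgroup Rˣ := H.SG ⊔ Subgroup.closure (ZS s ε P) with hΓ
  have : NeZero (Nat.card Γ : κ) := ⟨by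
    have := Nat.card_pos (α := Γ)
    exact_mod_cast this.ne'⟩
  let f : MonoidAlgebra κ Γ →ₐ[κ] R :=
    MonoidAlgebra.lift κ R Γ ((Units.coeHom R).comp Γ.subtype)
  have hf : ∀ u ∈ Γ, (u : R) ∈ f.range := by
    intro u hu
    refine ⟨MonoidAlgebra.of κ Γ ⟨u, hu⟩, ?_⟩
    simp [f]
  have hsurj : f.range = ⊤ := by
    rw [eq_top_iff, ← hgen]
    refine Algebra.adjoin_le ?_
    rintro _ (⟨i, rfl⟩ | ⟨i, rfl⟩)
    · have := hf ⟨s i, s i, H.ss i, H.ss i⟩ ((le_sup_left : H.SG ≤ Γ) ⟨[i], by simp [Sp]⟩)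
      exact this
    · have hE : IsE s ε P (al i) (ε i) := ⟨[], i, by simp, by simp⟩
      have hid := H.εε i
      have hsq : (1 - 2 * ε i) * (1 - 2 * ε i) = 1 := by
        simp only [mul_sub, sub_mul, two_mul, add_mul, mul_add, hid, one_mul, mul_one]
        abel
      have := hf ⟨1 - 2 * ε i, 1 - 2 * ε i, hsq, hsq⟩
        ((le_sup_right : _ ≤ Γ) (Subgroup.subset_closure ⟨_, _, hE, rfl⟩))
      have h2 : ε i = (1 / 2 : κ) • (1 - (1 - 2 * ε i)) := by
        rw [sub_sub_cancel, two_mul, ← two_smul κ, smul_smul]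
        norm_num
      rw [h2]
      exact Subalgebra.smul_mem _ (sub_mem (one_mem _) this) _
  exact RingHom.isSemisimpleRing_of_surjective f.toRingHom
    (fun y => by have : y ∈ f.range := hsurj ▸ Algebra.mem_top
                 exact this)
end BarRel
end Part3

section Part4
open PosForm
/-- Relations of the lattice. -/
structure LatRel {n : ℕ} (Q : SimpleGraph (Fin n)) {O A : Type*} [CommRing O] [Ring A]
    [Algebra O A] (l l' m mu d : O) (g ε : Fin n → A) : Prop where
  gg : ∀ i, g i * g i = 1 - m • g i + (mu * l') • ε i
  gε : ∀ i, g i * ε i = l' • ε i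
  εg : ∀ i, ε i * g i = l' • ε i
  εε : ∀ i, ε i * ε i = ε i
  cgg : ∀ i j, i ≠ j → ¬ Q.Adj i j → g i * g j = g j * g i
  cgε : ∀ i j, i ≠ j → ¬ Q.Adj i j → g i * ε j = ε j * g i
  cεε : ∀ i j, i ≠ j → ¬ Q.Adj i j → ε i * ε j = ε j * ε i
  braid : ∀ i j, Q.Adj i j → g i * g j * g i = g j * g i * g j
  ggε : ∀ i j, Q.Adj i j → g i * g j * ε i = ε j * g i * g j
  gεg : ∀ i j, Q.Adj i j → g i * ε j * (g i + m • 1 - mu • ε i) =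
    (g j + m • 1 - mu • ε j) * ε i * g j
  zz : ∀ i j, Q.Adj i j → ε i * ε j = d • (g j * g i * ε j)
  zzg : ∀ i j, Q.Adj i j → ε i * ε j * g i = d • (ε i * (g j + m • 1 - mu • ε j))
  gzz : ∀ i j, Q.Adj i j → g i * ε j * ε i = d • ((g j + m • 1 - mu • ε j) * ε i)
  zzz : ∀ i j, Q.Adj i j → ε i * ε j * ε i = d • d • ε i
  zgz : ∀ i j, Q.Adj i j → ε i * g j * ε i = l • d • ε i

namespace LatRel
variable {n : ℕ} {Q : SimpleGraph (Fin n)} {O A : Type*} [CommRing O] [Ring A]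
    [Algebra O A] {l l' m mu d : O} {g ε : Fin n → A}

lemma mul_smul_le (I : Ideal O) (W X : Submodule O A) : W * (I • X) ≤ I • (W * X) := by
  rw [Submodule.mul_le]
  intro a ha b hb
  induction hb using Submodule.smul_induction_on' with
  | smul r hr x hx => rw [mul_smul_comm]; exact Submodule.smul_mem_smul hr (Submodule.mul_mem_mul ha hx)
  | add x _ y _ h1 h2 => rw [mul_add]; exact add_mem h1 h2

lemma smul_mul_le (I : Ideal O) (W X : Submodule O A) : (I • W) * X ≤ I • (W * X) := by
  rw [Submodule.mul_le]
  intro a ha b hb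
  induction ha using Submodule.smul_induction_on' with
  | smul r hr x hx => rw [smul_mul_assoc]; exact Submodule.smul_mem_smul hr (Submodule.mul_mem_mul hx hb)
  | add x _ y _ h1 h2 => rw [add_mul]; exact add_mem h1 h2

/-- span of one pair of generators -/
def Vi (O : Type*) [CommRing O] {A : Type*} [Ring A] [Algebra O A] (g ε : Fin n → A)
    (i : Fin n) : Submodule O A := Submodule.span O {g i, ε i}

/-- span of all generators -/
def V (O : Type*) [CommRing O] {A : Type*} [Ring A] [Algebra O A] (g ε : Fin n → A) :
    Submodule O A := 1 ⊔ ⨆ i, Vi O g ε i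

lemma g_mem (i) : g i ∈ Vi O g ε i := Submodule.subset_span (by simp)
lemma ε_mem (i) : ε i ∈ Vi O g ε i := Submodule.subset_span (by simp)
lemma Vi_le (i) : Vi O g ε i ≤ V O g ε := le_sup_of_le_right (le_iSup _ i)
lemma one_le_V : 1 ≤ V O g ε := le_sup_left
lemma one_mem_V : (1 : A) ∈ V O g ε := Submodule.one_le.1 one_le_V
lemma gV (i) : g i ∈ V O g ε := Vi_le i (g_mem i)
lemma εV (i) : ε i ∈ V O g ε := Vi_le i (ε_mem i)

lemma pow_mono {a b : ℕ} (h : a ≤ b) : V O g ε ^ a ≤ V O g ε ^ b :=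
  pow_le_pow_right' one_le_V h

lemma V_fg : (V O g ε).FG := by
  refine Submodule.FG.sup ?_ (Submodule.fg_iSup _ fun i => ?_)
  · rw [Submodule.one_eq_span]; exact Submodule.fg_span (Set.finite_singleton _)
  · exact Submodule.fg_span (Set.toFinite _)

/-- product over a word -/
def M (O : Type*) [CommRing O] {A : Type*} [Ring A] [Algebra O A] (g ε : Fin n → A)
    (x : List (Fin n)) : Submodule O A := (x.map (Vi O g ε)).prod

lemma M_append (x y) : M O g ε (x ++ y) = M O g ε x * M O g ε y := by simp [M]
lemma M_cons (i y) : M O g ε (i :: y) = Vi O g ε i * M O g ε y := by simp [M]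
lemma M_nil : M O g ε [] = 1 := by simp [M]
lemma M_le (x) : M O g ε x ≤ V O g ε ^ x.length := by
  induction x with
  | nil => simp [M]
  | cons i y ih => rw [M_cons, List.length_cons, pow_succ']; exact mul_le_mul' (Vi_le i) ih

lemma sq_le (H : LatRel Q l l' m mu d g ε) (i) : Vi O g ε i * Vi O g ε i ≤ V O g ε := by
  rw [Vi, Submodule.span_mul_span, Submodule.span_le]
  rintro _ ⟨a, (rfl | rfl), b, (rfl | rfl), rfl⟩
  · simp only [H.gg]
    exact add_mem (sub_mem one_mem_V (Submodule.smul_mem _ _ (gV i))) (Submodule.smul_mem _ _ (εV i))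
  · simp only [H.gε]; exact Submodule.smul_mem _ _ (εV i)
  · simp only [H.εg]; exact Submodule.smul_mem _ _ (εV i)
  · simp only [H.εε]; exact εV i

lemma comm_eq (H : LatRel Q l l' m mu d g ε) {i j} (hn : i ≠ j) (hij : ¬ Q.Adj i j) :
    Vi O g ε i * Vi O g ε j = Vi O g ε j * Vi O g ε i := by
  rw [Vi, Vi, Submodule.span_mul_span, Submodule.span_mul_span]
  congr 1
  have hji : ¬ Q.Adj j i := fun h => hij h.symm
  ext t
  simp only [Set.mem_mul, Set.mem_insert_iff, Set.mem_singleton_iff, exists_eq_or_imp,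
    exists_eq_left, H.cgg i j hn hij, H.cgε i j hn hij, H.cεε i j hn hij, H.cgε j i hn.symm hji]
  tauto

lemma braid_le (H : LatRel Q l l' m mu d g ε) (I : Ideal O) (hm : m ∈ I) (hmu : mu ∈ I)
    (hd : d ∈ I) {i j} (hij : Q.Adj i j) :
    Vi O g ε i * Vi O g ε j * Vi O g ε i ≤
      Vi O g ε j * Vi O g ε i * Vi O g ε j ⊔ I • V O g ε ^ 3 := by
  set X := Vi O g ε j * Vi O g ε i * Vi O g ε j ⊔ I • V O g ε ^ 3 with hX
  have hX1 : ∀ {a b c}, a ∈ Vi O g ε j → b ∈ Vi O g ε i → c ∈ Vi O g ε j → a * b * c ∈ X :=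
    fun ha hb hc => Submodule.mem_sup_left (Submodule.mul_mem_mul (Submodule.mul_mem_mul ha hb) hc)
  have hX2 : ∀ {r : O} {a}, r ∈ I → a ∈ V O g ε ^ 3 → r • a ∈ X :=
    fun hr ha => Submodule.mem_sup_right (Submodule.smul_mem_smul hr ha)
  have hV3 : ∀ {a b c}, a ∈ V O g ε → b ∈ V O g ε → c ∈ V O g ε → a * b * c ∈ V O g ε ^ 3 :=
    fun ha hb hc => by
      rw [pow_succ, sq]; exact Submodule.mul_mem_mul (Submodule.mul_mem_mul ha hb) hc
  have hV2 : ∀ {a b}, a ∈ V O g ε → b ∈ V O g ε → a * b ∈ V O g ε ^ 3 :=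
    fun ha hb => by simpa using hV3 ha hb one_mem_V
  have hV1 : ∀ {a}, a ∈ V O g ε → a ∈ V O g ε ^ 3 :=
    fun ha => by simpa using hV2 ha one_mem_V
  have hbar : ∀ k, g k + m • 1 - mu • ε k ∈ V O g ε := fun k =>
    sub_mem (add_mem (gV k) (Submodule.smul_mem _ _ one_mem_V)) (Submodule.smul_mem _ _ (εV k))
  rw [Vi, Vi, Submodule.span_mul_span, Submodule.span_mul_span, Submodule.span_le]
  rintro _ ⟨_, ⟨a, (rfl | rfl), b, (rfl | rfl), rfl⟩, c, (rfl | rfl), rfl⟩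
  · simp only [H.braid i j hij]; exact hX1 (g_mem _) (g_mem _) (g_mem _)
  · simp only [H.ggε i j hij]; exact hX1 (ε_mem _) (g_mem _) (g_mem _)
  · have h := H.gεg i j hij
    have h2 : g i * ε j * g i = g j * ε i * g j + m • (ε i * g j) - mu • (ε j * ε i * g j)
        - m • (g i * ε j) + mu • (g i * ε j * ε i) := by
      simp only [mul_sub, mul_add, sub_mul, add_mul, mul_smul_comm, smul_mul_assoc, mul_one,
        one_mul] at h
      rw [sub_eq_iff_eq_add, ← eq_sub_iff_add_eq] at h
      rw [h]; abel
    simp only [h2]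
    exact add_mem (sub_mem (sub_mem (add_mem (hX1 (g_mem _) (ε_mem _) (g_mem _))
      (hX2 hm (hV2 (εV _) (gV _)))) (hX2 hmu (hV3 (εV _) (εV _) (gV _))))
      (hX2 hm (hV2 (gV _) (εV _)))) (hX2 hmu (hV3 (gV _) (εV _) (εV _)))
  · simp only [H.gzz i j hij]; exact hX2 hd (hV2 (hbar _) (εV _))
  · simp only [← H.ggε j i hij.symm]; exact hX1 (g_mem _) (g_mem _) (ε_mem _)
  · simp only [H.zgz i j hij]; exact Submodule.smul_mem _ _ (hX2 hd (hV1 (εV _)))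
  · simp only [H.zzg i j hij]; exact hX2 hd (hV2 (εV _) (hbar _))
  · simp only [H.zzz i j hij]; exact Submodule.smul_mem _ _ (hX2 hd (hV1 (εV _)))

lemma M_BE (H : LatRel Q l l' m mu d g ε) (I : Ideal O) (hm : m ∈ I) (hmu : mu ∈ I)
    (hd : d ∈ I) {x y} (h : BE Q x y) :
    M O g ε x ≤ M O g ε y ⊔ I • V O g ε ^ x.length ∧
    M O g ε y ≤ M O g ε x ⊔ I • V O g ε ^ x.length := by
  have key : ∀ (a b i j), Q.Adj i j → M O g ε (a ++ i :: j :: i :: b) ≤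
      M O g ε (a ++ j :: i :: j :: b) ⊔ I • V O g ε ^ (a.length + b.length + 3) := by
    intro a b i j hij
    simp only [M_append, M_cons]
    have h1 := braid_le H I hm hmu hd hij
    calc _ = M O g ε a * (Vi O g ε i * Vi O g ε j * Vi O g ε i) * M O g ε b := by
          simp only [mul_assoc]
      _ ≤ M O g ε a * (Vi O g ε j * Vi O g ε i * Vi O g ε j ⊔ I • V O g ε ^ 3) * M O g ε b :=
          mul_le_mul' (mul_le_mul' le_rfl h1) le_rfl
      _ = M O g ε a * (Vi O g ε j * Vi O g ε i * Vi O g ε j) * M O g ε b ⊔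
          M O g ε a * (I • V O g ε ^ 3) * M O g ε b := by rw [Submodule.mul_sup, Submodule.sup_mul]
      _ ≤ _ := by
        refine sup_le_sup (by simp only [mul_assoc]; exact le_rfl) ?_
        refine (mul_le_mul' (mul_smul_le _ _ _) le_rfl).trans ((smul_mul_le _ _ _).trans ?_)
        refine Submodule.smul_mono le_rfl ?_
        rw [show a.length + b.length + 3 = a.length + 3 + b.length by ring, pow_add, pow_add]
        exact mul_le_mul' (mul_le_mul' (M_le a) le_rfl) (M_le b)
  induction h with
  | refl x => exact ⟨le_sup_left, le_sup_left⟩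
  | symm h ih => rw [← h.length_eq]; exact ⟨ih.2, ih.1⟩
  | trans h1 h2 ih1 ih2 =>
    rw [← h1.length_eq] at ih2
    exact ⟨ih1.1.trans (sup_le ih2.1 le_sup_right), ih2.2.trans (sup_le ih1.2 le_sup_right)⟩
  | comm a b i j hn hij =>
    have : M O g ε (a ++ i :: j :: b) = M O g ε (a ++ j :: i :: b) := by
      simp only [M_append, M_cons, ← mul_assoc]
      rw [mul_assoc (M O g ε a), comm_eq H hn hij, ← mul_assoc (M O g ε a)]
    rw [this]; exact ⟨le_sup_left, le_sup_left⟩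
  | braid a b i j hij =>
    have e : (a ++ i :: j :: i :: b).length = a.length + b.length + 3 := by simp; omega
    rw [e]
    exact ⟨key a b i j hij, key a b j i hij.symm⟩

lemma pow_le {k : ℕ} {X : Submodule O A} (hX : V O g ε ^ k ≤ X)
    (hM : ∀ x : List (Fin n), x.length = k + 1 → M O g ε x ≤ X) : V O g ε ^ (k + 1) ≤ X := by
  have key : ∀ j : ℕ, ∀ y : List (Fin n), y.length + j = k + 1 →
      M O g ε y * V O g ε ^ j ≤ X := by
    intro j
    induction j with
    | zero => intro y hy; rw [pow_zero, mul_one]; exact hM y hy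
    | succ j ih =>
      intro y hy
      rw [pow_succ', ← mul_assoc]
      conv_lhs => rw [V]
      rw [Submodule.mul_sup, Submodule.sup_mul, mul_one, Submodule.mul_iSup, Submodule.iSup_mul]
      refine sup_le ?_ (iSup_le fun i => ?_)
      · refine le_trans ?_ hX
        rw [show k = y.length + j by omega, pow_add]
        exact mul_le_mul' (M_le y) le_rfl
      · have := ih (y ++ [i]) (by simp; omega)
        rwa [M_append, M_cons, M_nil, mul_one] at this
  simpa [M_nil] using key (k + 1) [] (by simp)

lemma stable [IsLocalRing O] (P : PosForm Q) (H : LatRel Q l l' m mu d g ε)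
    (hm : m ∈ IsLocalRing.maximalIdeal O) (hmu : mu ∈ IsLocalRing.maximalIdeal O)
    (hd : d ∈ IsLocalRing.maximalIdeal O) :
    ∃ N, V O g ε ^ (N + 1) ≤ V O g ε ^ N := by
  obtain ⟨N, hN⟩ := P.long
  refine ⟨N, ?_⟩
  refine Submodule.le_of_le_smul_of_le_jacobson_bot (I := IsLocalRing.maximalIdeal O)
    (V_fg.pow _) (IsLocalRing.jacobson_eq_maximalIdeal ⊥ bot_ne_top).ge ?_
  refine pow_le le_sup_left fun x hx => ?_
  obtain ⟨a, i, b, h⟩ := hN x (by omega)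
  have h1 := (M_BE H _ hm hmu hd h).1
  rw [hx] at h1
  refine h1.trans (sup_le_sup ?_ le_rfl)
  have hl := h.length_eq
  simp only [List.length_append, List.length_cons] at hl
  rw [M_append, M_cons, M_cons, ← mul_assoc (Vi O g ε i), show N = a.length + (1 + b.length) by omega,
    pow_add, pow_add, pow_one]
  exact mul_le_mul' (M_le a) (mul_le_mul' (sq_le H i) (M_le b))

lemma finite [IsLocalRing O] (P : PosForm Q) (H : LatRel Q l l' m mu d g ε)
    (hm : m ∈ IsLocalRing.maximalIdeal O) (hmu : mu ∈ IsLocalRing.maximalIdeal O)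
    (hd : d ∈ IsLocalRing.maximalIdeal O) :
    Module.Finite O (Algebra.adjoin O (Set.range g ∪ Set.range ε)) := by
  obtain ⟨N, hN⟩ := H.stable P hm hmu hd
  have hst : ∀ j, V O g ε ^ (N + j) ≤ V O g ε ^ N := by
    intro j
    induction j with
    | zero => exact le_rfl
    | succ j ih =>
      rw [← add_assoc, pow_succ]
      refine le_trans (mul_le_mul' ih le_rfl) ?_
      rw [← pow_succ]; exact hN
  have h1 : (1 : A) ∈ V O g ε ^ N := pow_mono (Nat.zero_le N) (by rw [pow_zero]; exact Submodule.one_le.1 le_rfl)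
  let L := (V O g ε ^ N).toSubalgebra h1 (fun x y hx hy => by
    have := Submodule.mul_mem_mul hx hy
    rw [← pow_add] at this
    exact hst N this)
  have hVN : V O g ε ≤ V O g ε ^ N := le_trans (by
    conv_lhs => rw [← pow_one (V O g ε)]
    exact pow_mono (by omega)) hN
  have hle : Algebra.adjoin O (Set.range g ∪ Set.range ε) ≤ L := by
    refine Algebra.adjoin_le ?_
    rintro _ (⟨i, rfl⟩ | ⟨i, rfl⟩)
    · exact hVN (gV i)
    · exact hVN (εV i)
  have hVL : V O g ε ≤ Subalgebra.toSubmodule (Algebra.adjoin O (Set.range g ∪ Set.range ε)) := by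
    refine sup_le ?_ (iSup_le fun i => ?_)
    · rw [Submodule.one_le, Subalgebra.mem_toSubmodule]; exact one_mem _
    · rw [Vi, Submodule.span_le]
      rintro _ (rfl | rfl)
      · exact Algebra.subset_adjoin (Or.inl ⟨i, rfl⟩)
      · exact Algebra.subset_adjoin (Or.inr ⟨i, rfl⟩)
  have heq : Subalgebra.toSubmodule (Algebra.adjoin O (Set.range g ∪ Set.range ε)) =
      V O g ε ^ N := by
    refine le_antisymm hle ?_
    refine (pow_le_pow_left' hVL N).trans ?_
    rcases Nat.eq_zero_or_pos N with rfl | hpos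
    · rw [pow_zero, Submodule.one_le, Subalgebra.mem_toSubmodule]; exact one_mem _
    · exact (Subalgebra.isIdempotentElem_toSubmodule _).pow_eq hpos.ne' |>.le
  have hfg := V_fg.pow N (M := V O g ε)
  rw [← heq] at hfg
  exact Module.Finite.iff_fg.2 hfg
end LatRel
end Part4

section Part5
open PosForm TensorProduct
section semiprime
variable {R : Type*} [Ring R]

lemma semiprime_of_semisimple [IsSemisimpleRing R] {x : R} (h : ∀ a, x * a * x = 0) : x = 0 := by
  have h1 : x ∈ Ring.jacobson R := by
    rw [← Ideal.jacobson_bot, Ideal.mem_jacobson_iff]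
    intro y
    refine ⟨1 - y * x, ?_⟩
    rw [Ideal.mem_bot]
    have := h y
    have h2 : y * x * y * x = 0 := by rw [mul_assoc, mul_assoc, ← mul_assoc x, this, mul_zero]
    rw [sub_mul, sub_mul, one_mul, h2]
    abel
  rwa [IsSemisimpleRing.jacobson_eq_bot] at h1

lemma semisimple_of_semiprime [IsArtinianRing R] (h : ∀ x : R, (∀ a, x * a * x = 0) → x = 0) :
    IsSemisimpleRing R := by
  rw [IsArtinianRing.isSemisimpleRing_iff_jacobson]
  obtain ⟨k, hk⟩ := IsArtinianRing.isNilpotent_jacobson_bot (R := R)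
  rw [Ideal.jacobson_bot] at hk
  induction k with
  | zero =>
    rw [Submodule.pow_zero, Ideal.one_eq_top] at hk
    rw [eq_bot_iff]; intro x _
    have : x ∈ (⊤ : Ideal R) := trivial
    rw [hk] at this; exact this
  | succ k ih =>
    rcases Nat.eq_zero_or_pos k with rfl | hpos
    · rw [zero_add, Submodule.pow_one] at hk; exact hk
    apply ih
    rw [Ideal.zero_eq_bot, eq_bot_iff]
    intro y hy
    refine h y fun a => ?_
    have h0 : y ∈ Ring.jacobson R := by
      have := Ideal.pow_le_pow_right (show 1 ≤ k from hpos) hy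
      rwa [Submodule.pow_one] at this
    have h2 : y * (a * y) ∈ Ring.jacobson R ^ k * Ring.jacobson R :=
      Ideal.mul_mem_mul hy (Ideal.mul_mem_left _ _ h0)
    rw [← Submodule.pow_succ, hk] at h2
    rw [mul_assoc]; exact h2
end semiprime

namespace LatRel
variable {n : ℕ} {Q : SimpleGraph (Fin n)}

lemma descend {O A A' : Type*} [CommRing O] [Ring A] [Ring A'] [Algebra O A] [Algebra O A']
    {l l' m mu d : O} {g ε : Fin n → A} (f : A' →ₐ[O] A) (hf : Function.Injective f)
    {g' ε' : Fin n → A'} (hg : ∀ i, f (g' i) = g i) (hε : ∀ i, f (ε' i) = ε i)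
    (H : LatRel Q l l' m mu d g ε) : LatRel Q l l' m mu d g' ε' := by
  constructor <;> intros <;> apply hf <;>
    simp only [map_mul, map_add, map_sub, map_smul, map_one, hg, hε]
  · apply H.gg
  · apply H.gε
  · apply H.εg
  · apply H.εε
  · apply H.cgg <;> assumption
  · apply H.cgε <;> assumption
  · apply H.cεε <;> assumption
  · apply H.braid <;> assumption
  · apply H.ggε <;> assumption
  · apply H.gεg <;> assumption
  · apply H.zz <;> assumption
  · apply H.zzg <;> assumption
  · apply H.gzz <;> assumption
  · apply H.zzz <;> assumption
  · apply H.zgz <;> assumption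

lemma toBar {O L B : Type*} [CommRing O] [Ring L] [Algebra O L] [Ring B] [Algebra O B]
    {l l' m mu d : O} {g ε : Fin n → L} (H : LatRel Q l l' m mu d g ε) (f : L →ₐ[O] B)
    (hm : ∀ b : B, m • b = 0) (hmu : ∀ b : B, mu • b = 0) (hd : ∀ b : B, d • b = 0)
    (hl : ∀ b : B, l' • b = b) : BarRel Q (fun i => f (g i)) (fun i => f (ε i)) := by
  constructor
  · intro i; have := congrArg f (H.gg i)
    simpa [mul_smul, hm, hmu] using this
  · intro i; have := congrArg f (H.gε i)
    simpa [hl] using this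
  · intro i; have := congrArg f (H.εg i)
    simpa [hl] using this
  · intro i; have := congrArg f (H.εε i)
    simpa using this
  · intro i j h1 h2; simpa using congrArg f (H.cgg i j h1 h2)
  · intro i j h1 h2; simpa using congrArg f (H.cgε i j h1 h2)
  · intro i j h1 h2; simpa using congrArg f (H.cεε i j h1 h2)
  · intro i j h1; simpa using congrArg f (H.braid i j h1)
  · intro i j h1; simpa using congrArg f (H.ggε i j h1)
  · intro i j h1; simpa [hd] using congrArg f (H.zz i j h1)

lemma exists_dvd {O ι : Type*} [CommRing O] [IsDomain O] [ValuationRing O] [Finite ι] [Nonempty ι]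
    (f : ι → O) : ∃ i, ∀ j, f i ∣ f j := by
  classical
  have := Fintype.ofFinite ι
  have key : ∀ s : Finset ι, s.Nonempty → ∃ i, ∀ j ∈ s, f i ∣ f j := by
    intro s hs
    induction hs using Finset.Nonempty.cons_induction with
    | singleton a => exact ⟨a, by simp⟩
    | cons a s ha hs ih =>
      obtain ⟨i, hi⟩ := ih
      rcases ValuationRing.dvd_total (f i) (f a) with h | h
      · exact ⟨i, fun j hj => by
          rcases Finset.mem_cons.1 hj with rfl | hj
          · exact h
          · exact hi j hj⟩
      · exact ⟨a, fun j hj => by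
          rcases Finset.mem_cons.1 hj with rfl | hj
          · exact dvd_rfl
          · exact h.trans (hi j hj)⟩
  obtain ⟨i, hi⟩ := key Finset.univ Finset.univ_nonempty
  exact ⟨i, fun j => hi j (Finset.mem_univ j)⟩

theorem semisimple_aux {O K A : Type*} (κ : Type*) [Field κ] [CharZero κ] [CommRing O] [IsDomain O] [ValuationRing O] [Field K]
    [Algebra O K] [IsFractionRing O K] [Ring A] [Algebra K A] [Algebra O A] [IsScalarTower O K A]
    [Algebra O κ] (hκ : ∀ r ∈ IsLocalRing.maximalIdeal O, algebraMap O κ r = 0)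
    {l l' m mu d : O} {g ε : Fin n → A} (P : PosForm Q) (H : LatRel Q l l' m mu d g ε)
    (hm : m ∈ IsLocalRing.maximalIdeal O) (hmu : mu ∈ IsLocalRing.maximalIdeal O)
    (hd : d ∈ IsLocalRing.maximalIdeal O) (hl : l' - 1 ∈ IsLocalRing.maximalIdeal O)
    (hgen : Algebra.adjoin K (Set.range g ∪ Set.range ε) = ⊤) : IsSemisimpleRing A := by
  have hLfin := H.finite P hm hmu hd
  set S : Set A := Set.range g ∪ Set.range ε with hS
  set L : Subalgebra O A := Algebra.adjoin O S with hL
  have htf : Module.IsTorsionFree O A := Module.IsTorsionFree.trans_faithfulSMul O K A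
  have hflat : Module.Flat O L :=
    Module.Flat.flat_iff_torsion_eq_bot_of_isBezout.2
      (Submodule.isTorsionFree_iff_torsion_eq_bot.1 inferInstance)
  have hfree : Module.Free O L := Module.free_of_flat_of_isLocalRing
  -- the generic fibre
  let F : K ⊗[O] L →ₐ[K] A := Algebra.TensorProduct.lift (Algebra.ofId K A) L.val
    (fun x y => Algebra.commutes x _)
  have hF : ∀ (k : K) (y : L), F (k ⊗ₜ y) = k • (y : A) := by
    intro k y
    rw [Algebra.smul_def]
    exact Algebra.TensorProduct.lift_tmul _ _ _ _ _
  have hFsurj : Function.Surjective F := by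
    have : F.range = ⊤ := by
      rw [eq_top_iff, ← hgen]
      refine Algebra.adjoin_le fun x hx => ?_
      exact ⟨1 ⊗ₜ ⟨x, Algebra.subset_adjoin hx⟩, by simpa using hF 1 ⟨x, Algebra.subset_adjoin hx⟩⟩
    intro y
    have h : y ∈ F.range := this ▸ Algebra.mem_top
    exact h
  have hfinA : Module.Finite K A := Module.Finite.of_surjective F.toLinearMap hFsurj
  have hart : IsArtinianRing A := IsArtinianRing.of_finite K A
  have hscale : ∀ x : A, ∃ c : O, c ≠ 0 ∧ ∃ y : L, (y : A) = c • x := by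
    intro x
    obtain ⟨z, rfl⟩ := hFsurj x
    induction z using TensorProduct.induction_on with
    | zero => exact ⟨1, one_ne_zero, 0, by simp⟩
    | tmul k y =>
      obtain ⟨a, b, hb, rfl⟩ := IsFractionRing.div_surjective (A := O) k
      have hb0 : b ≠ 0 := nonZeroDivisors.ne_zero hb
      have hb' : algebraMap O K b ≠ 0 := by
        simpa using hb0
      refine ⟨b, hb0, a • y, ?_⟩
      rw [hF, ← IsScalarTower.algebraMap_smul K b, smul_smul, mul_div_cancel₀ _ hb',
        IsScalarTower.algebraMap_smul]
      rfl
    | add u v hu hv =>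
      obtain ⟨c, hc, y, hy⟩ := hu
      obtain ⟨c', hc', y', hy'⟩ := hv
      refine ⟨c * c', mul_ne_zero hc hc', c' • y + c • y', ?_⟩
      rw [map_add, smul_add, mul_smul, mul_smul, ← smul_comm c' c (F u), ← hy, ← hy']
      rfl
  -- the special fibre
  let π : L →ₐ[O] κ ⊗[O] L := Algebra.TensorProduct.includeRight
  have hzero : ∀ r ∈ IsLocalRing.maximalIdeal O, ∀ b : κ ⊗[O] L, r • b = 0 := by
    intro r hr b
    rw [← IsScalarTower.algebraMap_smul κ r b]
    rw [hκ r hr, zero_smul]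
  let gL : Fin n → L := fun i => ⟨g i, Algebra.subset_adjoin (Or.inl ⟨i, rfl⟩)⟩
  let εL : Fin n → L := fun i => ⟨ε i, Algebra.subset_adjoin (Or.inr ⟨i, rfl⟩)⟩
  have HL : LatRel Q l l' m mu d gL εL :=
    H.descend L.val Subtype.val_injective (fun _ => rfl) (fun _ => rfl)
  have HB := HL.toBar π (hzero m hm) (hzero mu hmu) (hzero d hd) (fun b => by
    have h : algebraMap O κ l' = 1 := by
      have := hκ _ hl
      rwa [map_sub, map_one, sub_eq_zero] at this
    rw [← IsScalarTower.algebraMap_smul κ l' b, h, one_smul])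
  have hgenB : Algebra.adjoin κ (Set.range (fun i => π (gL i)) ∪ Set.range (fun i => π (εL i)))
      = ⊤ := by
    set T := Algebra.adjoin κ (Set.range (fun i => π (gL i)) ∪ Set.range (fun i => π (εL i)))
    have h1 : (T.restrictScalars O).comap π = ⊤ := by
      rw [eq_top_iff, ← Algebra.adjoin_adjoin_coe_preimage (R := O) (s := S)]
      refine Algebra.adjoin_le ?_
      rintro ⟨x, hx⟩ (⟨i, hi⟩ | ⟨i, hi⟩)
      · have e : gL i = ⟨x, hx⟩ := Subtype.ext hi
        rw [← e]
        exact Algebra.subset_adjoin (Or.inl ⟨i, rfl⟩)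
      · have e : εL i = ⟨x, hx⟩ := Subtype.ext hi
        rw [← e]
        exact Algebra.subset_adjoin (Or.inr ⟨i, rfl⟩)
    rw [eq_top_iff]
    rintro z -
    induction z using TensorProduct.induction_on with
    | zero => exact zero_mem _
    | tmul k y =>
      have h2 : y ∈ (T.restrictScalars O).comap π := h1 ▸ Algebra.mem_top
      have h3 : (1 : κ) ⊗ₜ[O] y ∈ T := h2
      have h4 : k ⊗ₜ[O] y = k • ((1 : κ) ⊗ₜ[O] y) := by rw [TensorProduct.smul_tmul', smul_eq_mul, mul_one]
      rw [h4]; exact T.smul_mem h3 k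
    | add u v hu hv => exact add_mem hu hv
  have hss : IsSemisimpleRing (κ ⊗[O] L) := HB.semisimple P hgenB
  -- lifting
  refine semisimple_of_semiprime fun x hx => ?_
  by_contra hx0
  obtain ⟨c, hc, y, hy⟩ := hscale x
  have hy0 : y ≠ 0 := by
    rintro rfl
    exact smul_ne_zero hc hx0 hy.symm
  have hyy : ∀ a : A, (y : A) * a * y = 0 := by
    intro a; rw [hy]; simp [hx]
  let b := Module.Free.chooseBasis O L
  have hne : Nonempty (Module.Free.ChooseBasisIndex O L) := by
    by_contra hcon
    rw [not_nonempty_iff] at hcon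
    exact hy0 (b.repr.injective (Finsupp.ext fun i => hcon.elim i))
  obtain ⟨i, hi⟩ := exists_dvd (fun j => b.repr y j)
  choose q hq using hi
  have hci : b.repr y i ≠ 0 := by
    intro h0
    apply hy0
    apply b.repr.injective
    ext j
    have := hq j
    rw [h0, zero_mul] at this
    simp [this]
  let w : L := ∑ j, q j • b j
  have hw : ∀ j, b.repr w j = q j := fun j => congrFun (b.repr_sum_self q) j
  have hyw : y = b.repr y i • w := by
    apply b.repr.injective
    ext j
    rw [map_smul, Finsupp.smul_apply, hw, smul_eq_mul]
    exact hq j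
  have hw1 : b.repr w i = 1 := by
    rw [hw]
    have := hq i
    exact mul_left_cancel₀ hci (by rw [← this, mul_one])
  have hww : ∀ a : L, w * a * w = 0 := by
    intro a
    have h1 : y * a * y = 0 := Subtype.ext (hyy a)
    rw [hyw] at h1
    simp only [smul_mul_assoc, mul_smul_comm, smul_smul] at h1
    exact (smul_eq_zero.1 h1).resolve_left (mul_ne_zero hci hci)
  have hπw : π w = 0 := by
    refine semiprime_of_semisimple fun z => ?_
    induction z using TensorProduct.induction_on with
    | zero => simp
    | tmul k a =>
      simp [π, Algebra.TensorProduct.tmul_mul_tmul, hww]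
    | add u v hu hv => rw [mul_add, add_mul, hu, hv, add_zero]
  have h1 := Module.Basis.baseChange_repr_tmul κ b 1 w i
  have h2 : (1 : κ) ⊗ₜ[O] w = 0 := hπw
  rw [h2, hw1] at h1
  simp at h1

theorem semisimple {O K A : Type*} [CommRing O] [IsDomain O] [ValuationRing O] [Field K]
    [Algebra O K] [IsFractionRing O K] [Ring A] [Algebra K A] [Algebra O A] [IsScalarTower O K A]
    [CharZero (IsLocalRing.ResidueField O)]
    {l l' m mu d : O} {g ε : Fin n → A} (P : PosForm Q) (H : LatRel Q l l' m mu d g ε)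
    (hm : m ∈ IsLocalRing.maximalIdeal O) (hmu : mu ∈ IsLocalRing.maximalIdeal O)
    (hd : d ∈ IsLocalRing.maximalIdeal O) (hl : l' - 1 ∈ IsLocalRing.maximalIdeal O)
    (hgen : Algebra.adjoin K (Set.range g ∪ Set.range ε) = ⊤) : IsSemisimpleRing A :=
  semisimple_aux (IsLocalRing.ResidueField O)
    (fun r hr => (IsLocalRing.residue_eq_zero_iff r).2 hr) P H hm hmu hd hl hgen
end LatRel
end Part5

section Part6
section ValRing
open Polynomial

/-- the embedding of the two variable polynomial ring -/
noncomputable def phi1 : ℚ[X] →+* RatFunc ℚ :=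
  (Polynomial.aeval (RatFunc.X⁻¹ : RatFunc ℚ)).toRingHom

lemma phi1_inj : Function.Injective phi1 := by
  have h : Transcendental ℚ (RatFunc.X⁻¹ : RatFunc ℚ) := by
    intro h
    have h2 := h.inv
    rw [inv_inv] at h2
    have h3 := RatFunc.transcendental_X (K := ℚ)
    apply h3
    convert h2
    exact Subsingleton.elim _ _
  exact transcendental_iff_injective.1 h

/-- the embedding of the two variable polynomial ring -/
noncomputable def phi2 : ℚ[X][X] →+* RatFunc (RatFunc ℚ) :=
  ((algebraMap (RatFunc ℚ)[X] (RatFunc (RatFunc ℚ))).comp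
    (Polynomial.taylorAlgHom (-1 : RatFunc ℚ)).toRingHom).comp (Polynomial.mapRingHom phi1)

lemma phi2_inj : Function.Injective phi2 := by
  intro a b h
  have h1 := IsFractionRing.injective (RatFunc ℚ)[X] (RatFunc (RatFunc ℚ)) h
  have h2 := Polynomial.taylor_injective (-1 : RatFunc ℚ) h1
  exact Polynomial.map_injective _ phi1_inj h2

lemma phi2_X : phi2 X = lVar - 1 := by
  have : phi2 X = algebraMap (RatFunc ℚ)[X] (RatFunc (RatFunc ℚ))
      (taylor (-1 : RatFunc ℚ) (X.map phi1)) := rfl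
  rw [this]
  simp [lVar, sub_eq_add_neg]

lemma phi2_C : phi2 (C X) = deltaVar⁻¹ := by
  have : phi2 (C X) = algebraMap (RatFunc ℚ)[X] (RatFunc (RatFunc ℚ))
      (taylor (-1 : RatFunc ℚ) ((C X : ℚ[X][X]).map phi1)) := rfl
  rw [this]
  simp [deltaVar, phi1]

theorem exists_val : ∃ O : ValuationSubring BMWField, O.valuation deltaVar⁻¹ < 1 ∧
    O.valuation (lVar - 1) < 1 ∧ CharZero (IsLocalRing.ResidueField O) := by
  let ev : ℚ[X][X] →+* ℚ := (Polynomial.evalRingHom 0).comp (Polynomial.evalRingHom 0)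
  let E : ℚ[X][X] ≃+* phi2.range := RingEquiv.ofBijective phi2.rangeRestrict
    ⟨fun a b h => phi2_inj (congrArg Subtype.val h), phi2.rangeRestrict_surjective⟩
  let I : Ideal phi2.range := RingHom.ker (ev.comp E.symm.toRingHom)
  have hI : I ≠ ⊤ := RingHom.ker_ne_top _
  obtain ⟨O, h1, h2⟩ := Ideal.image_subset_nonunits_valuationSubring I hI
  have key : ∀ p, ev p = 0 → O.valuation (phi2 p) < 1 := by
    intro p hp
    have : phi2 p ∈ O.nonunits := by
      refine h2 ⟨E p, ?_, rfl⟩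
      change ev (E.symm (E p)) = 0
      rw [E.symm_apply_apply, hp]
    exact this
  refine ⟨O, ?_, ?_, ?_⟩
  · rw [← phi2_C]; exact key _ (by simp [ev])
  · rw [← phi2_X]; exact key _ (by simp [ev])
  · have hQ : ∀ q : ℚ, phi2 (C (C q)) ∈ O := fun q => h1 ⟨_, rfl⟩
    let f : ℚ →+* O := (phi2.comp (C.comp C)).codRestrict O.toSubring hQ
    exact charZero_of_injective_ringHom ((IsLocalRing.residue O).comp f).injective

end ValRing
end Part6

section Part7
/-- The defining relations in a general algebra. -/
structure PreRel {n : ℕ} (Q : SimpleGraph (Fin n)) {K A : Type*} [Field K] [Ring A] [Algebra K A]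
    (l δ m : K) (g e : Fin n → A) : Prop where
  l0 : l ≠ 0
  d0 : δ ≠ 0
  m0 : m ≠ 0
  hm : m * (1 - δ) = l - l⁻¹
  lm : 1 + l * m ≠ 0
  gg : ∀ i j, i ≠ j → ¬ Q.Adj i j → g i * g j = g j * g i
  braid : ∀ i j, Q.Adj i j → g i * g j * g i = g j * g i * g j
  quad : ∀ i, m • e i = l • (g i * g i + m • g i - 1)
  ge : ∀ i, g i * e i = l⁻¹ • e i
  ege : ∀ i j, Q.Adj i j → e i * g j * e i = l • e i

namespace PreRel
variable {n : ℕ} {Q : SimpleGraph (Fin n)} {K A : Type*} [Field K] [Ring A] [Algebra K A]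
    {l δ m : K} {g e : Fin n → A}

lemma e_eq (H : PreRel Q l δ m g e) (i) : e i = (m⁻¹ * l) • (g i * g i + m • g i - 1) := by
  rw [mul_smul, ← H.quad, smul_smul, inv_mul_cancel₀ H.m0, one_smul]

lemma conj (H : PreRel Q l δ m g e) {i j} {x : A} (h : x * g i = g j * x) : x * e i = e j * x := by
  have h2 : x * (g i * g i) = g j * g j * x := by
    rw [← mul_assoc, h, mul_assoc, h, mul_assoc]
  rw [H.e_eq i, H.e_eq j, mul_smul_comm, smul_mul_assoc, mul_sub, mul_add, sub_mul, add_mul,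
    h2, mul_smul_comm, smul_mul_assoc, h, mul_one, one_mul]

lemma eg (H : PreRel Q l δ m g e) (i) : e i * g i = l⁻¹ • e i := by
  rw [← H.conj (rfl : g i * g i = g i * g i), H.ge]

lemma g2 (H : PreRel Q l δ m g e) (i) : g i * g i = 1 - m • g i + (m * l⁻¹) • e i := by
  have := congrArg (fun x => l⁻¹ • x) (H.quad i)
  simp only [smul_smul, inv_mul_cancel₀ H.l0, one_smul] at this
  rw [mul_comm m, this]; abel

lemma ee (H : PreRel Q l δ m g e) (i) : e i * e i = δ • e i := by
  have h0 := H.l0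
  have h1 := H.m0
  have hd : δ = (m - l + l⁻¹) / m := by
    rw [eq_div_iff H.m0]; linear_combination -H.hm
  have : (g i * g i + m • g i - 1) * e i = (l⁻¹ * l⁻¹ + m * l⁻¹ - 1) • e i := by
    rw [sub_mul, add_mul, mul_assoc, H.ge, mul_smul_comm, H.ge, smul_mul_assoc, H.ge, one_mul]
    module
  conv_lhs => rw [H.e_eq i, smul_mul_assoc, ← H.e_eq i, this, smul_smul]
  congr 1
  rw [hd]; field_simp; ring

/-- The inverse of `g i`. -/
def h (m : K) (g e : Fin n → A) (i : Fin n) : A := g i + m • (1 : A) - m • e i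

lemma gh (H : PreRel Q l δ m g e) (i) : g i * h m g e i = 1 := by
  rw [h, mul_sub, mul_add, H.g2, mul_smul_comm, mul_smul_comm, H.ge, mul_one]
  module

lemma hg (H : PreRel Q l δ m g e) (i) : h m g e i * g i = 1 := by
  rw [h, sub_mul, add_mul, H.g2, smul_mul_assoc, smul_mul_assoc, H.eg, one_mul]
  module

lemma eh (H : PreRel Q l δ m g e) (i) : e i * h m g e i = l • e i := by
  have : l = l⁻¹ + m * (1 - δ) := by rw [H.hm]; ring
  rw [h, mul_sub, mul_add, H.eg, mul_smul_comm, mul_smul_comm, H.ee, mul_one]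
  conv_rhs => rw [this]
  module

lemma gge (H : PreRel Q l δ m g e) {i j} (a : Q.Adj i j) : g i * g j * e i = e j * (g i * g j) :=
  H.conj (by rw [H.braid i j a, mul_assoc])

lemma ggee (H : PreRel Q l δ m g e) {i j} (a : Q.Adj i j) : g j * (g i * (e j * e i)) = e i := by
  have := H.gge a.symm
  rw [← mul_assoc, ← mul_assoc, this, mul_assoc, mul_assoc, H.ge, mul_smul_comm, mul_smul_comm,
    ← mul_assoc, H.ege i j a, smul_smul, inv_mul_cancel₀ H.l0, one_smul]

lemma gee (H : PreRel Q l δ m g e) {i j} (a : Q.Adj i j) :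
    g i * (e j * e i) = h m g e j * e i := by
  rw [← H.ggee a, ← mul_assoc (h m g e j), H.hg, one_mul]
  rw [H.ggee a]

lemma ee_hh (H : PreRel Q l δ m g e) {i j} (a : Q.Adj i j) :
    e j * e i = h m g e i * (h m g e j * e i) := by
  rw [← H.gee a, ← mul_assoc, H.hg, one_mul]

lemma eegg (H : PreRel Q l δ m g e) {i j} (a : Q.Adj i j) : e i * e j * g i * g j = e i := by
  have := H.gge a
  rw [mul_assoc, mul_assoc, ← this, ← mul_assoc, ← mul_assoc, H.eg, smul_mul_assoc, smul_mul_assoc,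
    H.ege i j a, smul_smul, inv_mul_cancel₀ H.l0, one_smul]

lemma eeg (H : PreRel Q l δ m g e) {i j} (a : Q.Adj i j) :
    e i * e j * g i = e i * h m g e j := by
  conv_rhs => rw [← H.eegg a]
  rw [mul_assoc _ (g j), H.gh, mul_one]

lemma eee (H : PreRel Q l δ m g e) {i j} (a : Q.Adj i j) : e i * e j * e i = e i := by
  have h1 : e i * e j * e i = l • (l • e i + (m * δ) • e i - m • (e i * e j * e i)) := by
    conv_lhs => rw [mul_assoc, H.ee_hh a, ← mul_assoc, H.eh, smul_mul_assoc, ← mul_assoc]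
    rw [h, mul_sub, mul_add, sub_mul, add_mul, H.ege i j a, mul_smul_comm, mul_one, smul_mul_assoc,
      H.ee, mul_smul_comm, smul_mul_assoc, smul_smul]
  have h2 : (1 + l * m) • (e i * e j * e i) = (l * (l + m * δ)) • e i := by
    rw [add_smul, one_smul]
    nth_rewrite 1 [h1]
    module
  have h3 : l * (l + m * δ) = 1 + l * m := by
    have := H.hm
    have h0 := mul_inv_cancel₀ H.l0
    linear_combination -l * this + h0
  rw [h3] at h2
  have := congrArg (fun x => (1 + l * m)⁻¹ • x) h2
  simpa only [smul_smul, inv_mul_cancel₀ H.lm, one_smul] using this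

lemma ee_gg (H : PreRel Q l δ m g e) {i j} (a : Q.Adj i j) : e j * e i = g i * g j * e i := by
  conv_rhs => rw [← H.eee a, mul_assoc (e i), ← mul_assoc, H.gge a, mul_assoc, mul_assoc,
    ← mul_assoc (g j), H.ge, smul_mul_assoc, mul_smul_comm, mul_smul_comm, ← mul_assoc (g i),
    ← mul_assoc, ← mul_assoc, H.ege j i a.symm, smul_mul_assoc, smul_smul, inv_mul_cancel₀ H.l0,
    one_smul]

lemma geh (H : PreRel Q l δ m g e) {i j} (a : Q.Adj i j) :
    g i * e j * h m g e i = h m g e j * e i * g j := by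
  have h1 := H.gge a.symm
  calc g i * e j * h m g e i = h m g e j * (g j * g i * e j) * h m g e i := by
        rw [← mul_assoc, ← mul_assoc, H.hg, one_mul]
    _ = _ := by rw [h1, ← mul_assoc, ← mul_assoc, mul_assoc _ (g i), H.gh, mul_one]

theorem lat (H : PreRel Q l δ m g e) :
    LatRel Q l l⁻¹ m (m * δ) δ⁻¹ g (fun i => δ⁻¹ • e i) := by
  have hh : ∀ i, g i + m • (1 : A) - (m * δ) • δ⁻¹ • e i = h m g e i := by
    intro i; rw [h, smul_smul, mul_assoc, mul_inv_cancel₀ H.d0, mul_one]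
  have d0 := H.d0
  constructor
  · intro i
    rw [H.g2, smul_smul]; congr 2; field_simp
  · intro i; rw [mul_smul_comm, H.ge, smul_comm]
  · intro i; rw [smul_mul_assoc, H.eg, smul_comm]
  · intro i; rw [smul_mul_assoc, mul_smul_comm, H.ee, smul_smul δ⁻¹ δ, inv_mul_cancel₀ d0, one_smul]
  · exact H.gg
  · intro i j h1 h2
    rw [mul_smul_comm, smul_mul_assoc, H.conj (H.gg i j h1 h2)]
  · intro i j h1 h2
    rw [mul_smul_comm, smul_mul_assoc, mul_smul_comm, smul_mul_assoc]
    rw [H.conj (x := e i) (i := j) (j := j)]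
    exact (H.conj (H.gg i j h1 h2 ▸ rfl : g j * g i = g i * g j)).symm
  · exact H.braid
  · intro i j a
    rw [mul_smul_comm, H.gge a, smul_mul_assoc, smul_mul_assoc, mul_assoc]
  · intro i j a
    rw [hh, hh, mul_smul_comm, mul_smul_comm, smul_mul_assoc, smul_mul_assoc, H.geh a]
  · intro i j a
    rw [mul_smul_comm, mul_smul_comm, smul_mul_assoc, H.ee_gg a.symm]
  · intro i j a
    rw [hh]
    simp only [mul_smul_comm, smul_mul_assoc, H.eeg a]
  · intro i j a
    rw [hh]
    simp only [mul_smul_comm, smul_mul_assoc, mul_assoc, H.gee a]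
  · intro i j a
    simp only [mul_smul_comm, smul_mul_assoc, H.eee a]
  · intro i j a
    simp only [mul_smul_comm, smul_mul_assoc, H.ege i j a]
    rw [smul_comm δ⁻¹ l, smul_comm δ⁻¹ l]

end PreRel

lemma LatRel.transfer {n : ℕ} {Q : SimpleGraph (Fin n)} {O K A : Type*} [CommRing O] [Field K]
    [Algebra O K] [Ring A] [Algebra K A] [Algebra O A] [IsScalarTower O K A]
    {l l' m mu d : O} {g ε : Fin n → A}
    (H : LatRel Q (algebraMap O K l) (algebraMap O K l') (algebraMap O K m) (algebraMap O K mu)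
      (algebraMap O K d) g ε) : LatRel Q l l' m mu d g ε := by
  obtain ⟨h1, h2, h3, h4, h5, h6, h7, h8, h9, h10, h11, h12, h13, h14, h15⟩ := H
  simp only [← map_mul, IsScalarTower.algebraMap_smul] at *
  exact ⟨h1, h2, h3, h4, h5, h6, h7, h8, h9, h10, h11, h12, h13, h14, h15⟩
end Part7

section Part8
section PosFormInst

/-- the Cartan matrix -/
def cartanM {n : ℕ} (a : Fin n → Fin n → Bool) : Matrix (Fin n) (Fin n) ℤ :=
  fun i j => if i = j then 2 else if a i j then -1 else 0

lemma pos_of_weights {n : ℕ} (a : Fin n → Fin n → Bool) (hs : ∀ i j, a i j = a j i)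
    (hi : ∀ i, a i i = false) (d : Fin n → ℤ) (hd : ∀ i, 0 < d i)
    (hw : ∀ i, ∑ j, (if a i j then d j else 0) < 2 * d i) (v : Fin n → ℤ) (hv : v ≠ 0) :
    0 < ∑ i, ∑ j, v i * cartanM a i j * v j := by
  have hd' : ∀ i, (0 : ℚ) < d i := fun i => by exact_mod_cast hd i
  let u : Fin n → ℚ := fun i => v i / d i
  have hvu : ∀ i, (v i : ℚ) = d i * u i := fun i => by
    simp only [u]; rw [mul_div_cancel₀ _ (hd' i).ne']
  let c : Fin n → Fin n → ℚ := fun i j => cartanM a i j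
  have hc : ∀ i j, c i j = c j i := by
    intro i j; simp only [c, cartanM, hs i j, eq_comm]
  have hrow : ∀ i, 0 < ∑ j, c i j * d j := by
    intro i
    have h1 : ∀ j, cartanM a i j * d j = (if i = j then 2 * d j else 0) -
        (if a i j then d j else 0) := by
      intro j
      by_cases h : i = j
      · subst h; simp [cartanM, hi]
      · simp [cartanM, h]; split_ifs <;> simp
    have h2 : 0 < ∑ j, cartanM a i j * d j := by
      rw [Finset.sum_congr rfl fun j _ => h1 j, Finset.sum_sub_distrib, Finset.sum_ite_eq]
      simpa using hw i
    have h3 : ((∑ j, cartanM a i j * d j : ℤ) : ℚ) = ∑ j, c i j * d j := by push_cast; rfl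
    rw [← h3]; exact_mod_cast h2
  have key : ((∑ i, ∑ j, v i * cartanM a i j * v j : ℤ) : ℚ) =
      ∑ i, u i ^ 2 * d i * ∑ j, c i j * d j
        + ∑ i, ∑ j, -c i j * d i * d j * (u i - u j) ^ 2 / 2 := by
    have e1 : ∑ i, u i ^ 2 * d i * ∑ j, c i j * d j = ∑ i, ∑ j, c i j * d i * d j * u i ^ 2 := by
      refine Finset.sum_congr rfl fun i _ => ?_
      rw [Finset.mul_sum]
      exact Finset.sum_congr rfl fun j _ => by ring
    have e2 : ∑ i, ∑ j, c i j * d i * d j * u i ^ 2 = ∑ i, ∑ j, c i j * d i * d j * u j ^ 2 := by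
      rw [Finset.sum_comm]
      refine Finset.sum_congr rfl fun i _ => Finset.sum_congr rfl fun j _ => ?_
      rw [hc j i]; ring
    have e3 : ∑ i, u i ^ 2 * d i * ∑ j, c i j * d j =
        ∑ i, ∑ j, c i j * d i * d j * (u i ^ 2 + u j ^ 2) / 2 := by
      have : ∑ i, ∑ j, c i j * d i * d j * (u i ^ 2 + u j ^ 2) / 2 =
        (∑ i, ∑ j, c i j * d i * d j * u i ^ 2 + ∑ i, ∑ j, c i j * d i * d j * u j ^ 2) / 2 := by
        rw [← Finset.sum_add_distrib, Finset.sum_div]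
        refine Finset.sum_congr rfl fun i _ => ?_
        rw [← Finset.sum_add_distrib, Finset.sum_div]
        exact Finset.sum_congr rfl fun j _ => by ring
      rw [this, ← e2, e1]; ring
    rw [e3, ← Finset.sum_add_distrib]
    push_cast
    refine Finset.sum_congr rfl fun i _ => ?_
    rw [← Finset.sum_add_distrib]
    refine Finset.sum_congr rfl fun j _ => ?_
    rw [hvu, hvu]
    change d i * u i * c i j * (d j * u j) = _
    ring
  have hfin : (0 : ℚ) < ((∑ i, ∑ j, v i * cartanM a i j * v j : ℤ) : ℚ) := by
    rw [key]
    refine add_pos_of_pos_of_nonneg ?_ ?_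
    · obtain ⟨i, hi0⟩ : ∃ i, v i ≠ 0 := by
        by_contra hcon; push Not at hcon; exact hv (funext hcon)
      have hu : u i ≠ 0 := by
        intro h0; have := hvu i; rw [h0, mul_zero] at this; exact hi0 (by exact_mod_cast this)
      refine Finset.sum_pos' (fun k _ => ?_) ⟨i, Finset.mem_univ _, ?_⟩
      · have := hrow k; have := hd' k; positivity
      · have := hrow i; have := hd' i; positivity
    · refine Finset.sum_nonneg fun i _ => Finset.sum_nonneg fun j _ => ?_
      by_cases h : i = j
      · subst h; simp
      · have h1 : 0 ≤ -c i j := by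
          simp only [c, cartanM, h, if_false]; split_ifs <;> simp
        have := hd' i; have := hd' j
        positivity
  exact_mod_cast hfin

/-- Positive form from weights. -/
noncomputable def PosForm.ofWeights {n : ℕ} (Q : SimpleGraph (Fin n)) (a : Fin n → Fin n → Bool)
    (ha : ∀ i j, Q.Adj i j ↔ a i j = true) (d : Fin n → ℤ) (hd : ∀ i, 0 < d i)
    (hw : ∀ i, ∑ j, (if a i j then d j else 0) < 2 * d i) : PosForm Q where
  B := Matrix.toBilin' (cartanM a)
  symm v w := by
    have hs : ∀ i j, a i j = a j i := fun i j => by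
      rw [Bool.eq_iff_iff, ← ha, ← ha]; exact Q.adj_comm i j
    rw [Matrix.toBilin'_apply, Matrix.toBilin'_apply, Finset.sum_comm]
    refine Finset.sum_congr rfl fun i _ => Finset.sum_congr rfl fun j _ => ?_
    have : cartanM a j i = cartanM a i j := by simp only [cartanM, hs i j, eq_comm]
    rw [this]; ring
  diag i := by rw [Matrix.toBilin'_single]; simp [cartanM]
  adj i j h := by
    rw [Matrix.toBilin'_single]; simp [cartanM, h.ne, (ha i j).1 h]
  nadj i j h1 h2 := by
    rw [Matrix.toBilin'_single]; rw [ha] at h2; simp [cartanM, h1, h2]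
  pos v hv := by
    rw [Matrix.toBilin'_apply]
    refine pos_of_weights a (fun i j => ?_) (fun i => ?_) d hd hw v hv
    · rw [Bool.eq_iff_iff, ← ha, ← ha]; exact Q.adj_comm i j
    · have := (ha i i).not.1 (Q.loopless.irrefl i)
      simpa using this

lemma sum_fin_le (n k : ℕ) (F : ℕ → ℤ) (b : Prop) [Decidable b] :
    ∑ j : Fin n, (if b ∧ (j : ℕ) = k then F j else 0) = if b ∧ k < n then F k else 0 := by
  by_cases hb : b
  · by_cases h : k < n
    · rw [Finset.sum_eq_single ⟨k, h⟩]
      · simp [h]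
      · intro j _ hj
        rw [if_neg]; rintro ⟨_, h2⟩; exact hj (Fin.ext h2)
      · simp
    · rw [if_neg (by tauto)]
      refine Finset.sum_eq_zero fun j _ => if_neg ?_
      rintro ⟨_, h2⟩; have := j.2; omega
  · simp [hb]

lemma posForm_A (n : ℕ) : Nonempty (PosForm (typeA n)) := by
  refine ⟨PosForm.ofWeights _ (fun i j => decide ((i : ℕ) + 1 = j ∨ (j : ℕ) + 1 = i)) ?_
    (fun i => ((i : ℤ) + 1) * (n - i)) ?_ ?_⟩
  · intro i j
    simp only [typeA, SimpleGraph.fromRel_adj, decide_eq_true_eq, ne_eq, Fin.ext_iff]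
    omega
  · intro i
    have : (i : ℤ) < n := by exact_mod_cast i.2
    have h2 : 0 < (n : ℤ) - i := by linarith
    positivity
  · intro i
    let F : ℕ → ℤ := fun k => ((k : ℤ) + 1) * (n - k)
    have h1 : ∀ j : Fin n, (if decide ((i : ℕ) + 1 = j ∨ (j : ℕ) + 1 = i) = true then
        ((j : ℤ) + 1) * (n - j) else 0) = (if True ∧ (j : ℕ) = i + 1 then F j else 0)
          + (if (1 ≤ (i : ℕ)) ∧ (j : ℕ) = i - 1 then F j else 0) := by
      intro j
      simp only [F, decide_eq_true_eq, true_and]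
      split_ifs <;> first | omega | simp
    rw [Finset.sum_congr rfl fun j _ => h1 j, Finset.sum_add_distrib, sum_fin_le, sum_fin_le]
    obtain ⟨i, hi⟩ := i
    have hn : (i : ℤ) < n := by exact_mod_cast hi
    simp only [F, true_and]
    rcases i with _ | i
    · simp
      split_ifs <;> linarith
    · simp [show i < n by omega]
      push_cast at *
      split_ifs
      · nlinarith
      · have : (n : ℤ) = i + 2 := by omega
        rw [this]; nlinarith

lemma posForm_D (n : ℕ) (h4 : 4 ≤ n) : Nonempty (PosForm (typeD n)) := by
  let F : ℕ → ℤ := fun k => if k ≤ 1 then (n : ℤ) ^ 2 - 1 else 2 * ((n : ℤ) ^ 2 - k ^ 2)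
  have h4' : (4 : ℤ) ≤ n := by exact_mod_cast h4
  refine ⟨PosForm.ofWeights _ (fun i j =>
    decide (((i : ℕ) ≤ 1 ∧ (j : ℕ) = 2) ∨ ((j : ℕ) ≤ 1 ∧ (i : ℕ) = 2) ∨
      (2 ≤ (i : ℕ) ∧ (i : ℕ) + 1 = (j : ℕ)) ∨ (2 ≤ (j : ℕ) ∧ (j : ℕ) + 1 = (i : ℕ)))) ?_
    (fun i => F i) ?_ ?_⟩
  · intro i j
    simp only [typeD, SimpleGraph.fromRel_adj, decide_eq_true_eq, ne_eq, Fin.ext_iff]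
    omega
  · intro i
    have : (i : ℤ) < n := by exact_mod_cast i.2
    have h0 : (0 : ℤ) ≤ i := by positivity
    simp only [F]; split_ifs <;> nlinarith
  · intro i
    have h1 : ∀ j : Fin n, (if decide (((i : ℕ) ≤ 1 ∧ (j : ℕ) = 2) ∨ ((j : ℕ) ≤ 1 ∧ (i : ℕ) = 2) ∨
      (2 ≤ (i : ℕ) ∧ (i : ℕ) + 1 = (j : ℕ)) ∨ (2 ≤ (j : ℕ) ∧ (j : ℕ) + 1 = (i : ℕ))) = true then
        F j else 0) = (if ((i : ℕ) ≤ 1) ∧ (j : ℕ) = 2 then F j else 0)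
          + (if ((i : ℕ) = 2) ∧ (j : ℕ) = 0 then F j else 0)
          + (if ((i : ℕ) = 2) ∧ (j : ℕ) = 1 then F j else 0)
          + (if (2 ≤ (i : ℕ)) ∧ (j : ℕ) = i + 1 then F j else 0)
          + (if (3 ≤ (i : ℕ)) ∧ (j : ℕ) = i - 1 then F j else 0) := by
      intro j
      simp only [decide_eq_true_eq]
      split_ifs <;> first | omega | simp
    rw [Finset.sum_congr rfl fun j _ => h1 j]
    simp only [Finset.sum_add_distrib, sum_fin_le]
    obtain ⟨i, hi⟩ := i
    have hn : (i : ℤ) < n := by exact_mod_cast hi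
    simp only
    rcases i with _ | _ | _ | i
    · simp [F, show 2 < n by omega]
    · simp [F, show 2 < n by omega]
    · simp [F, show 0 < n by omega, show 1 < n by omega, show 3 < n by omega]
      linarith
    · simp [F, show i + 2 < n by omega]
      push_cast at *
      split_ifs
      · nlinarith
      · have : (n : ℤ) = i + 4 := by omega
        rw [this]; nlinarith

lemma posForm_E (n : ℕ) (hn : n = 6 ∨ n = 7 ∨ n = 8) : Nonempty (PosForm (typeE n)) := by
  rcases hn with rfl | rfl | rfl
  all_goals
    refine ⟨PosForm.ofWeights _ (fun i j => decide (i ≠ j ∧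
      ((((i : ℕ) = 0 ∧ (j : ℕ) = 2) ∨ ((i : ℕ) = 1 ∧ (j : ℕ) = 3) ∨
      (2 ≤ (i : ℕ) ∧ (i : ℕ) + 1 = (j : ℕ))) ∨ (((j : ℕ) = 0 ∧ (i : ℕ) = 2) ∨ ((j : ℕ) = 1 ∧ (i : ℕ) = 3) ∨
      (2 ≤ (j : ℕ) ∧ (j : ℕ) + 1 = (i : ℕ)))))) (fun i j => by
        simp only [typeE, SimpleGraph.fromRel_adj, decide_eq_true_eq])
        ?_ ?_ ?_⟩
  · exact ![16, 22, 30, 42, 30, 16]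
  · decide
  · decide
  · exact ![34, 49, 66, 96, 75, 52, 27]
  · decide
  · decide
  · exact ![92, 136, 182, 270, 220, 168, 114, 58]
  · decide
  · decide
end PosFormInst
end Part8

section Final

lemma isQuasiHereditary_of_semisimple (A : Type*) [Ring A] [IsSemisimpleRing A] :
    IsQuasiHereditary A := by
  refine ⟨1, fun i => if i = 0 then ⊥ else ⊤, ?_, by simp, by simp, ?_⟩
  · intro i j hij
    by_cases hi : i = 0
    · simp [hi]
    · have hj : j ≠ 0 := by
        rintro rfl; exact hi (le_antisymm hij (Fin.zero_le i))
      simp [hi, hj]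
  · intro j
    have hj : j = 0 := Subsingleton.elim _ _
    subst hj
    beta_reduce
    generalize hI : (if (Fin.castSucc (0 : Fin 1)) = 0 then (⊥ : TwoSidedIdeal A) else ⊤) = I
    have hJ : (if (Fin.succ (0 : Fin 1)) = 0 then (⊥ : TwoSidedIdeal A) else ⊤) = ⊤ := by simp
    rw [hJ]
    have hss : IsSemisimpleRing I.ringCon.Quotient :=
      RingHom.isSemisimpleRing_of_surjective I.ringCon.mk' I.ringCon.mk'_surjective
    have h1 : ∀ x, x ∈ TwoSidedIdeal.map I.ringCon.mk' (⊤ : TwoSidedIdeal A) := by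
      intro x
      obtain ⟨a, rfl⟩ := I.ringCon.mk'_surjective x
      exact TwoSidedIdeal.subset_span ⟨a, trivial, rfl⟩
    refine ⟨?_, ?_, ?_⟩
    · have e1 : TwoSidedIdeal.asIdeal (TwoSidedIdeal.map I.ringCon.mk' (⊤ : TwoSidedIdeal A)) = ⊤ :=
        eq_top_iff.2 fun x _ => h1 x
      rw [e1]
      change Ideal.span _ = ⊤
      rw [Ideal.eq_top_iff_one]
      exact Ideal.subset_span ⟨1, h1 1, 1, h1 1, one_mul 1⟩
    · intro x _ y hy z _
      rw [Ideal.jacobson_bot, IsSemisimpleRing.jacobson_eq_bot] at hy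
      rw [(Submodule.mem_bot _).1 hy]; simp
    · exact Module.projective_of_isSemisimpleRing _ _

lemma lVar_ne_C (c : RatFunc ℚ) : (lVar : BMWField) ≠ RatFunc.C c := by
  intro h
  have : (Polynomial.X : Polynomial (RatFunc ℚ)) = Polynomial.C c := by
    apply IsFractionRing.injective (Polynomial (RatFunc ℚ)) (RatFunc (RatFunc ℚ))
    rw [RatFunc.algebraMap_X, RatFunc.algebraMap_C]; exact h
  exact Polynomial.X_ne_C _ this

lemma delta_ne_C (c : ℚ) : (RatFunc.X : RatFunc ℚ) ≠ RatFunc.C c := by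
  intro h
  have : (Polynomial.X : Polynomial ℚ) = Polynomial.C c := by
    apply IsFractionRing.injective (Polynomial ℚ) (RatFunc ℚ)
    rw [RatFunc.algebraMap_X, RatFunc.algebraMap_C]; exact h
  exact Polynomial.X_ne_C _ this

lemma lVar_sq_ne_C (c : RatFunc ℚ) : (lVar * lVar : BMWField) ≠ RatFunc.C c := by
  intro h
  have : (Polynomial.X * Polynomial.X : Polynomial (RatFunc ℚ)) = Polynomial.C c := by
    apply IsFractionRing.injective (Polynomial (RatFunc ℚ)) (RatFunc (RatFunc ℚ))
    rw [map_mul, RatFunc.algebraMap_X, RatFunc.algebraMap_C]; exact h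
  have h2 := congrArg Polynomial.natDegree this
  rw [Polynomial.natDegree_C, ← pow_two, Polynomial.natDegree_X_pow] at h2
  omega

lemma l0 : lVar ≠ 0 := by have := lVar_ne_C 0; rwa [map_zero] at this
lemma d0 : deltaVar ≠ 0 := by
  intro h; refine delta_ne_C 0 ?_
  rw [map_zero]; exact (map_eq_zero RatFunc.C).1 h
lemma d1 : 1 - deltaVar ≠ 0 := by
  intro h; refine delta_ne_C 1 (RatFunc.C_injective ?_)
  rw [map_one, map_one]; exact (sub_eq_zero.1 h).symm
lemma l2 : lVar * lVar ≠ 1 := by have := lVar_sq_ne_C 1; rwa [map_one] at this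
lemma l2d : lVar * lVar ≠ deltaVar := lVar_sq_ne_C _

lemma m0 : mVar ≠ 0 := by
  refine div_ne_zero (fun h => l2 ?_) d1
  rw [sub_eq_zero] at h
  nth_rewrite 2 [h]; exact mul_inv_cancel₀ l0

lemma lm0 : 1 + lVar * mVar ≠ 0 := by
  intro h
  have h0 := l0
  have h1 := d1
  apply l2d
  rw [mVar] at h
  field_simp at h
  linear_combination h

/-- images of generators -/
noncomputable def gA (n : ℕ) (Q : SimpleGraph (Fin n)) (i : Fin n) : BMWAlgebra n Q :=
  RingQuot.mkAlgHom BMWField (BMWRel n Q) (FreeAlgebra.ι BMWField (.inl i))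
/-- images of generators -/
noncomputable def eA (n : ℕ) (Q : SimpleGraph (Fin n)) (i : Fin n) : BMWAlgebra n Q :=
  RingQuot.mkAlgHom BMWField (BMWRel n Q) (FreeAlgebra.ι BMWField (.inr i))

lemma preRel (n : ℕ) (Q : SimpleGraph (Fin n)) :
    PreRel Q lVar deltaVar mVar (gA n Q) (eA n Q) where
  l0 := l0
  d0 := d0
  m0 := m0
  hm := div_mul_cancel₀ _ d1
  lm := lm0
  gg i j h1 h2 := by
    simpa only [gA, eA, map_mul] using RingQuot.mkAlgHom_rel BMWField (BMWRel.gg i j h1 h2)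
  braid i j h := by
    simpa only [gA, eA, map_mul] using RingQuot.mkAlgHom_rel BMWField (BMWRel.braid i j h)
  quad i := by
    simpa only [gA, eA, map_mul, map_smul, map_add, map_sub, map_one] using
      RingQuot.mkAlgHom_rel BMWField (BMWRel.quad (Q := Q) i)
  ge i := by
    simpa only [gA, eA, map_mul, map_smul] using RingQuot.mkAlgHom_rel BMWField (BMWRel.ge (Q := Q) i)
  ege i j h := by
    simpa only [gA, eA, map_mul, map_smul] using RingQuot.mkAlgHom_rel BMWField (BMWRel.ege i j h)

lemma gen (n : ℕ) (Q : SimpleGraph (Fin n)) :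
    Algebra.adjoin BMWField (Set.range (gA n Q) ∪ Set.range (fun i => deltaVar⁻¹ • eA n Q i)) = ⊤ := by
  set T := Algebra.adjoin BMWField (Set.range (gA n Q) ∪ Set.range (fun i => deltaVar⁻¹ • eA n Q i))
  have h1 : T.comap (RingQuot.mkAlgHom BMWField (BMWRel n Q)) = ⊤ := by
    rw [eq_top_iff, ← FreeAlgebra.adjoin_range_ι]
    refine Algebra.adjoin_le ?_
    rintro _ ⟨i | i, rfl⟩
    · exact Algebra.subset_adjoin (Or.inl ⟨i, rfl⟩)
    · change eA n Q i ∈ T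
      have h : deltaVar⁻¹ • eA n Q i ∈ T := Algebra.subset_adjoin (Or.inr ⟨i, rfl⟩)
      have := T.smul_mem h deltaVar
      rwa [smul_smul, mul_inv_cancel₀ d0, one_smul] at this
  rw [eq_top_iff]
  intro x _
  obtain ⟨y, rfl⟩ := RingQuot.mkAlgHom_surjective BMWField (BMWRel n Q) x
  have : y ∈ T.comap (RingQuot.mkAlgHom BMWField (BMWRel n Q)) := by rw [h1]; trivial
  exact this

theorem bmw_semisimple_aux {n : ℕ} {Q : SimpleGraph (Fin n)} (P : PosForm Q) {A : Type*} [Ring A]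
    [Algebra BMWField A] {g e : Fin n → A} (H : PreRel Q lVar deltaVar mVar g e)
    (hgen : Algebra.adjoin BMWField (Set.range g ∪ Set.range (fun i => deltaVar⁻¹ • e i)) = ⊤) :
    IsSemisimpleRing A := by
  obtain ⟨O, hd, hl, hc⟩ := exists_val
  set v := O.valuation
  have vl : v lVar = 1 := by
    have := v.map_one_add_of_lt hl
    rwa [add_sub_cancel] at this
  have vl' : v lVar⁻¹ = 1 := by rw [map_inv₀, vl, inv_one]
  have vl1 : v (lVar⁻¹ - 1) < 1 := by
    have : lVar⁻¹ - 1 = -(lVar⁻¹ * (lVar - 1)) := by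
      rw [mul_sub, inv_mul_cancel₀ l0]; ring
    rw [this, Valuation.map_neg, map_mul, vl', one_mul]; exact hl
  have vll : v (lVar - lVar⁻¹) < 1 := by
    have : lVar - lVar⁻¹ = (lVar - 1) - (lVar⁻¹ - 1) := by ring
    rw [this]; exact (v.map_sub _ _).trans_lt (max_lt hl vl1)
  have vd1 : v (deltaVar⁻¹ - 1) = 1 := by
    rw [← Valuation.map_neg, neg_sub]
    exact v.map_one_sub_of_lt hd
  have vmu : v (mVar * deltaVar) < 1 := by
    have h0 := d0
    have h1 := d1
    have h2 : deltaVar⁻¹ - 1 ≠ 0 := by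
      intro h; rw [h] at vd1; simp at vd1
    have : mVar * deltaVar = (lVar - lVar⁻¹) * (deltaVar⁻¹ - 1)⁻¹ := by
      have h3 : deltaVar⁻¹ - 1 = (1 - deltaVar) * deltaVar⁻¹ := by
        rw [sub_mul, mul_inv_cancel₀ h0, one_mul]
      rw [h3, mVar, mul_inv, inv_inv]; ring
    rw [this, map_mul, map_inv₀, vd1, inv_one, mul_one]; exact vll
  have vm : v mVar < 1 := by
    have : mVar = (mVar * deltaVar) * deltaVar⁻¹ := by
      rw [mul_assoc, mul_inv_cancel₀ d0, mul_one]
    rw [this, map_mul]; exact mul_lt_one_of_lt_of_le vmu hd.le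
  have mem : ∀ x : BMWField, v x ≤ 1 → x ∈ O := fun x hx => (O.valuation_le_one_iff x).1 hx
  let a : O := ⟨lVar, mem _ vl.le⟩
  let a' : O := ⟨lVar⁻¹, mem _ vl'.le⟩
  let b : O := ⟨mVar, mem _ vm.le⟩
  let c : O := ⟨mVar * deltaVar, mem _ vmu.le⟩
  let d : O := ⟨deltaVar⁻¹, mem _ hd.le⟩
  let : Algebra O A :=
    Algebra.compHom A (algebraMap O BMWField)
  have : IsScalarTower O BMWField A := IsScalarTower.of_algebraMap_eq fun _ => rfl
  have HL : LatRel Q a a' b c d g (fun i => deltaVar⁻¹ • e i) :=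
    LatRel.transfer (K := BMWField) H.lat
  exact HL.semisimple (K := BMWField) P ((O.valuation_lt_one_iff b).2 vm)
    ((O.valuation_lt_one_iff c).2 vmu) ((O.valuation_lt_one_iff d).2 hd)
    ((O.valuation_lt_one_iff (a' - 1)).2 vl1) hgen

theorem bmw_semisimple (n : ℕ) (Q : SimpleGraph (Fin n)) (P : PosForm Q) :
    IsSemisimpleRing (BMWAlgebra n Q) :=
  bmw_semisimple_aux P (preRel n Q) (gen n Q)

end Final

/-- Let `Q` be one of the graphs `A_n` (`n ≥ 1`), `D_n`
(`n ≥ 4`), `E_6`, `E_7` or `E_8`. Then the Birman–Murakami–Wenzl algebra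
`B(Q)` over `K = ℚ(l,δ)` is quasi-hereditary. -/
theorem bmwAlgebra_isQuasiHereditary
    (n : ℕ) (Q : SimpleGraph (Fin n))
    (hQ : (1 ≤ n ∧ Q = typeA n) ∨ (4 ≤ n ∧ Q = typeD n) ∨
      ((n = 6 ∨ n = 7 ∨ n = 8) ∧ Q = typeE n)) :
    IsQuasiHereditary (BMWAlgebra n Q) := by
  have hP : Nonempty (PosForm Q) := by
    rcases hQ with ⟨_, rfl⟩ | ⟨h, rfl⟩ | ⟨h, rfl⟩
    · exact posForm_A n
    · exact posForm_D n h
    · exact posForm_E n h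
  obtain ⟨P⟩ := hP
  haveI := bmw_semisimple n Q P
  exact isQuasiHereditary_of_semisimple _
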